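/- arXiv:0903.3395 — 4 statements merged into one kernel-verified Lean document; each statement's English description precedes it below -/
import Mathlib

section
/- There is a constant C > 0 such that for every 1 ≤ p ≤ ∞ and every integer n ≥ 2 the following holds with r = (1/C)·(log n / n)^{1 - 1/min(p,2)}: for every bounded holomorphic function f on the open unit ball B of ℓ_p^n with monomial expansion f(z) = ∑_{α ∈ ℕ₀^n} a_α z^α, and for every z ∈ ℂ^n with ‖z‖_p ≤ r, one has ∑_{α ∈ ℕ₀^n} |a_α z^α| ≤ sup_{w ∈ B} |f(w)|. In particular the Bohr radius of B_{ℓ_p^n} is at least (1/C)(log n/n)^{1-1/min(p,2)}. -/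
open Finset
open scoped ENNReal

/-- The `ℓ_p`-norm of a vector in `ℂ^n`, for `1 ≤ p ≤ ∞`. -/
noncomputable def pNorm (p : ℝ≥0∞) {n : ℕ} (z : Fin n → ℂ) : ℝ :=
  if p = ∞ then ⨆ i, ‖z i‖ else (∑ i, ‖z i‖ ^ p.toReal) ^ (1 / p.toReal)

/-!
Write `f = ∑ P_m` with `P_m` homogeneous of degree `m`, and let `M = sup_B |f|`. Integrating `f`
along circles in `B` against a Fejér kernel gives Wiener's inequality `|P_m| ≤ 2 (M - |a_0|)` on `B`
for `m ≥ 1`. So it is enough that the majorant `∑ |a_α z^α|` of `P_m` is at most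
`3 ^ (-m) * sup_B |P_m|` on `r B`.

By Euler's identity the majorant of `P_m` is controlled by those of its partial derivatives.
Passing to degree `m - 1` replaces the number of monomials of degree `m` by the number `N` of those
of degree `m - 1`, and this is what produces the logarithm: `(log n / n) ^ m * N ≤ 4 ^ m`.

Hölder's inequality over the `N` monomials costs `N ^ (1 - 1 / min p 2)`. For `p ≥ 2` it is combined
with Parseval and the comparison of the `L²` and `L¹` norms of a homogeneous polynomial on the
torus: the latter norm can be summed over the gradient of `P_m`. For `p ≤ 2` it is combined with
Cauchy's estimate for each coefficient of a directional derivative and the multinomial theorem.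
-/

section Numerics

lemma multichoose_mul_pow_le {x : ℝ} (hx₀ : 0 ≤ x) (hx₁ : x < 1) (n m : ℕ) :
    n.multichoose m * x ^ m ≤ ((1 - x) ^ n)⁻¹ := by
  cases n with
  | zero => cases m <;> simp
  | succ k =>
    have hsum := hasSum_choose_mul_geometric_of_norm_lt_one k
      (show ‖x‖ < 1 by rwa [Real.norm_of_nonneg hx₀])
    rw [Nat.multichoose_eq, show k + 1 + m - 1 = m + k by omega, Nat.choose_symm_add,
      ← one_div]
    exact le_hasSum hsum m fun j _ => by positivity

lemma inv_one_sub_le_exp_two_mul {x : ℝ} (hx₀ : 0 ≤ x) (hx₁ : x ≤ 1 / 2) :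
    (1 - x)⁻¹ ≤ Real.exp (2 * x) := by
  rw [inv_le_iff_one_le_mul₀ (by linarith)]
  nlinarith [Real.add_one_le_exp (2 * x)]

lemma multichoose_mul_log_div_pow_le_sqrt {n : ℕ} (hn : 0 < n) (m : ℕ) :
    n.multichoose m * (Real.log n / n / 4) ^ m ≤ √n := by
  have hn' : (0 : ℝ) < n := by exact_mod_cast hn
  have hlog₁ : Real.log n / n ≤ 1 := (div_le_one hn').2 (Real.log_le_self hn'.le)
  set x := Real.log n / n / 4 with hx
  have hx₀ : 0 ≤ x := by positivity
  calc n.multichoose m * x ^ m ≤ ((1 - x)⁻¹) ^ n := by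
        rw [inv_pow]
        exact multichoose_mul_pow_le hx₀ (by linarith) n m
    _ ≤ Real.exp (2 * x) ^ n := by
        have : 0 ≤ 1 - x := by linarith
        gcongr
        exact inv_one_sub_le_exp_two_mul hx₀ (by linarith)
    _ = Real.exp (Real.log n / 2) := by
        rw [← Real.exp_nat_mul, hx]
        congr 1
        field_simp
        ring
    _ = √n := by rw [Real.exp_half, Real.exp_log hn']

lemma log_div_mul_sqrt_le_two {x : ℝ} (hx : 0 < x) : Real.log x / x * √x ≤ 2 := by
  have hlog := Real.log_le_self (Real.sqrt_nonneg x)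
  rw [Real.log_sqrt hx.le] at hlog
  rw [div_mul_eq_mul_div, div_le_iff₀ hx]
  nlinarith [Real.mul_self_sqrt hx.le, Real.sqrt_nonneg x]

lemma log_div_pow_mul_multichoose_le (n m : ℕ) :
    (Real.log n / n) ^ (m + 1) * n.multichoose m ≤ 4 ^ (m + 1) := by
  rcases n.eq_zero_or_pos with rfl | hn
  · simp
  calc (Real.log n / n) ^ (m + 1) * n.multichoose m
      = 4 ^ m * (Real.log n / n * (n.multichoose m * (Real.log n / n / 4) ^ m)) := by
        rw [div_pow (Real.log n / n), pow_succ]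
        field_simp
    _ ≤ 4 ^ m * (Real.log n / n * √n) := by
        gcongr
        exact multichoose_mul_log_div_pow_le_sqrt hn m
    _ ≤ 4 ^ m * 4 := by
        gcongr
        exact (log_div_mul_sqrt_le_two (by exact_mod_cast hn)).trans (by norm_num)
    _ = 4 ^ (m + 1) := (pow_succ 4 m).symm

lemma mul_rpow_log_div_pow_mul_multichoose_le {c σ : ℝ} (hc : 0 ≤ c) (hσ₀ : 0 ≤ σ) (hσ₁ : σ ≤ 1)
    (n m : ℕ) :
    (c * (Real.log n / n) ^ σ) ^ (m + 1) * (n.multichoose m : ℝ) ^ σ ≤ (c * 4) ^ (m + 1) := by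
  have hL : 0 ≤ Real.log n / n := div_nonneg (Real.log_natCast_nonneg n) n.cast_nonneg
  calc (c * (Real.log n / n) ^ σ) ^ (m + 1) * (n.multichoose m : ℝ) ^ σ
      = c ^ (m + 1) * ((Real.log n / n) ^ (m + 1) * n.multichoose m) ^ σ := by
        rw [Real.mul_rpow (by positivity) (by positivity), mul_pow, mul_assoc,
          Real.rpow_pow_comm hL]
    _ ≤ c ^ (m + 1) * (4 ^ (m + 1)) ^ σ := by
        gcongr
        exact log_div_pow_mul_multichoose_le n m
    _ ≤ c ^ (m + 1) * 4 ^ (m + 1) := by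
        gcongr
        exact Real.rpow_le_self_of_one_le (one_le_pow₀ (by norm_num)) hσ₁
    _ = (c * 4) ^ (m + 1) := (mul_pow c 4 (m + 1)).symm

lemma sum_pow_sum_le_exp_mul_multinomial {ι : Type*} (s : Finset ι) (β : ι → ℕ) :
    ((∑ i ∈ s, β i : ℕ) : ℝ) ^ (∑ i ∈ s, β i) ≤
      Real.exp (∑ i ∈ s, β i : ℕ) * Nat.multinomial s β * ∏ i ∈ s, (β i : ℝ) ^ β i := by
  set m := ∑ i ∈ s, β i
  calc (m : ℝ) ^ m ≤ Real.exp m * m.factorial :=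
        (div_le_iff₀ (by positivity)).1 (Real.pow_div_factorial_le_exp (m : ℝ) m.cast_nonneg m)
    _ = Real.exp m * Nat.multinomial s β * ∏ i ∈ s, ((β i).factorial : ℝ) := by
        rw [← Nat.multinomial_spec s β]
        push_cast
        ring
    _ ≤ Real.exp m * Nat.multinomial s β * ∏ i ∈ s, (β i : ℝ) ^ β i := by
        gcongr with i
        exact_mod_cast Nat.factorial_le_pow (β i)

/-- With `b k` in the role of the degree `k` part of a majorant: the geometric decay leaves at most
`M - b 0` for all the positive degrees together. -/
lemma le_of_hasSum_of_le_geometric {b : ℕ → ℝ} {s M : ℝ} (hb : HasSum b s)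
    (hle : ∀ m, b (m + 1) ≤ 2 * (M - b 0) * (1 / 3) ^ (m + 1)) : s ≤ M := by
  have htail : HasSum (fun m => b (m + 1)) (s - b 0) := by
    simpa using (hasSum_nat_add_iff' 1).2 hb
  have hgeom : HasSum (fun m : ℕ => 2 * (M - b 0) * (1 / 3 : ℝ) ^ (m + 1)) (M - b 0) := by
    have h := ((hasSum_geometric_of_lt_one (r := (1 / 3 : ℝ)) (by norm_num)
      (by norm_num)).mul_left (1 / 3)).mul_left (2 * (M - b 0))
    simp only [← pow_succ'] at h
    rwa [show 2 * (M - b 0) * (1 / 3 * (1 - 1 / 3)⁻¹) = M - b 0 by ring] at h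
  linarith [hasSum_le hle htail hgeom]

end Numerics

section Majorants

open MvPolynomial

variable {ι : Type*}

/-- The polynomial `∑ |c_α| X^α` attached to `P = ∑ c_α X^α`; its value at `|z|` is the sum of the
absolute values of the terms of `P` at `z`. -/
noncomputable def majorant (P : MvPolynomial ι ℂ) : MvPolynomial ι ℝ :=
  ∑ α ∈ P.support, monomial α ‖coeff α P‖

@[simp]
lemma coeff_majorant (P : MvPolynomial ι ℂ) (α : ι →₀ ℕ) :
    coeff α (majorant P) = ‖coeff α P‖ := by
  classical
  simp only [majorant, coeff_sum, coeff_monomial, sum_ite_eq', mem_support_iff, ne_eq, ite_not,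
    ite_eq_right_iff]
  intro h
  rw [h, norm_zero]

lemma isHomogeneous_majorant {P : MvPolynomial ι ℂ} {m : ℕ}
    (hP : P.IsHomogeneous m) : (majorant P).IsHomogeneous m := by
  intro α hα
  rw [coeff_majorant, norm_ne_zero_iff] at hα
  exact hP hα

lemma pderiv_majorant (P : MvPolynomial ι ℂ) (k : ι) :
    pderiv k (majorant P) = majorant (pderiv k P) := by
  ext α
  rw [coeff_pderiv, coeff_majorant, coeff_majorant, coeff_pderiv, norm_mul]
  congr 1
  exact_mod_cast (RCLike.norm_natCast (K := ℂ) (α k + 1)).symm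

lemma eval_nonneg_of_coeff_nonneg {Q : MvPolynomial ι ℝ} (hQ : ∀ α, 0 ≤ coeff α Q) {x : ι → ℝ}
    (hx : 0 ≤ x) : 0 ≤ eval x Q := by
  rw [eval_eq]
  exact sum_nonneg fun α _ => mul_nonneg (hQ α) (prod_nonneg fun i _ => pow_nonneg (hx i) _)

lemma eval_smul_of_isHomogeneous {R : Type*} [CommSemiring R] {P : MvPolynomial ι R} {m : ℕ}
    (hP : P.IsHomogeneous m) (c : R) (z : ι → R) : eval (c • z) P = c ^ m * eval z P := by
  rw [eval_eq, eval_eq, mul_sum]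
  refine sum_congr rfl fun α hα => ?_
  simp only [Pi.smul_apply, smul_eq_mul, mul_pow, prod_mul_distrib, prod_pow_eq_pow_sum,
    ← hP.degree_eq_sum_deg_support hα]
  ring

variable [Fintype ι]

/-- By Euler's identity the right-hand side is `m + 1` times the left-hand side. -/
lemma eval_majorant_le_sum_pderiv {P : MvPolynomial ι ℂ} {m : ℕ} (hP : P.IsHomogeneous (m + 1))
    {x : ι → ℝ} (hx : 0 ≤ x) :
    eval x (majorant P) ≤ ∑ k, x k * eval x (majorant (pderiv k P)) := by
  have heuler := congrArg (eval x) (isHomogeneous_majorant hP).sum_X_mul_pderiv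
  simp only [map_sum, map_mul, eval_X, pderiv_majorant, nsmul_eq_mul] at heuler
  rw [heuler]
  refine le_mul_of_one_le_left (eval_nonneg_of_coeff_nonneg (fun α => ?_) hx) (by simp)
  simp

lemma eval_eq_sum_finsuppAntidiag [DecidableEq ι] {R : Type*} [CommSemiring R]
    {P : MvPolynomial ι R} {m : ℕ} (hP : P.IsHomogeneous m) (x : ι → R) :
    eval x P = ∑ α ∈ finsuppAntidiag univ m, coeff α P * ∏ i, x i ^ α i := by
  rw [eval_eq']
  refine sum_subset (fun α hα => ?_) fun α _ hα => by rw [notMem_support_iff.1 hα, zero_mul]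
  rw [mem_finsuppAntidiag']
  have := hP.degree_eq_sum_deg_support hα
  simp_all [Finsupp.sum]

lemma sum_multinomial_mul_prod_pow [DecidableEq ι] {R : Type*} [CommSemiring R] (x : ι → R)
    (m : ℕ) : ∑ α ∈ finsuppAntidiag univ m, (Nat.multinomial univ α : R) * ∏ i, x i ^ α i =
      (∑ i, x i) ^ m := by
  have hhom : ((∑ i, X i : MvPolynomial ι R) ^ m).IsHomogeneous m := by
    simpa using (IsHomogeneous.sum univ _ 1 fun i _ => isHomogeneous_X R i).pow m
  have heval := eval_eq_sum_finsuppAntidiag hhom x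
  simp only [map_pow, map_sum, eval_X] at heval
  rw [heval]
  refine sum_congr rfl fun α hα => ?_
  have hdeg := (mem_finsuppAntidiag.1 hα).1
  rw [coeff_sum_X_pow_of_fintype, Finsupp.sum_fintype _ _ fun _ => rfl, if_pos hdeg,
    Finsupp.multinomial_of_support_subset (subset_univ _)]

end Majorants

section DirectionalDerivative

open MvPolynomial

variable {ι : Type*} [Fintype ι]

lemma hasDerivAt_eval_add_smul (P : MvPolynomial ι ℂ) (z y : ι → ℂ) (t : ℂ) :
    HasDerivAt (fun t : ℂ => eval (z + t • y) P)
      (∑ k, y k * eval (z + t • y) (pderiv k P)) t := by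
  classical
  induction P using MvPolynomial.induction_on with
  | C c => simpa using hasDerivAt_const t c
  | add P Q hP hQ => simpa [mul_add, sum_add_distrib] using hP.fun_add hQ
  | mul_X P i hP =>
    have hX : HasDerivAt (fun t : ℂ => z i + t * y i) (y i) t := by
      simpa using ((hasDerivAt_id t).mul_const (y i)).const_add (z i)
    simp only [map_mul, eval_X, Pi.add_apply, Pi.smul_apply, smul_eq_mul, pderiv_mul, pderiv_X,
      map_add]
    refine (hP.fun_mul hX).congr_deriv ?_
    have hsingle (k : ι) : eval (z + t • y) ((Pi.single k 1 : ι → MvPolynomial ι ℂ) i)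
        = if i = k then 1 else 0 := by
      rw [Pi.single_apply]
      split_ifs <;> simp
    simp only [hsingle, mul_add, sum_add_distrib, mul_ite, mul_one, mul_zero, sum_ite_eq,
      mem_univ, if_true, sum_mul, mul_assoc, mul_comm (y i)]

lemma norm_sum_mul_eval_pderiv_le {P : MvPolynomial ι ℂ} {z y : ι → ℂ} {B : ℝ}
    (hB : ∀ t : ℂ, ‖t‖ = 1 → ‖eval (z + t • y) P‖ ≤ B) :
    ‖∑ k, y k * eval z (pderiv k P)‖ ≤ B := by
  have hderiv := hasDerivAt_eval_add_smul P z y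
  have hdiff : Differentiable ℂ fun t : ℂ => eval (z + t • y) P :=
    fun t => (hderiv t).differentiableAt
  have hcauchy := Complex.norm_deriv_le_of_forall_mem_sphere_norm_le one_pos
    (hdiff.diffContOnCl (s := Metric.ball 0 1)) fun t ht => hB t (mem_sphere_zero_iff_norm.1 ht)
  simpa [(hderiv 0).deriv] using hcauchy

end DirectionalDerivative

section Estimates

open MeasureTheory

lemma card_finsupp_antidiagonal_le {ι : Type*} [DecidableEq ι] (γ : ι →₀ ℕ) :
    #(antidiagonal γ) ≤ 2 ^ γ.degree := calc
  #(antidiagonal γ) ≤ Multiset.card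
      ((Finsupp.toMultiset γ).antidiagonal.map (Prod.map Multiset.toFinsupp Multiset.toFinsupp)) :=
    (congrArg card (Multiset.toFinsupp_support _)).trans_le (Multiset.toFinset_card_le _)
  _ = 2 ^ γ.degree := by
    rw [Multiset.card_map, Multiset.card_antidiagonal, Finsupp.card_toMultiset]
    rfl

lemma hasSum_sum_antidiagonal_mul_self {A : Type*} [AddCommMonoid A] [HasAntidiagonal A] {a : A → ℝ}
    {s : ℝ} (ha₀ : 0 ≤ a) (ha : HasSum a s) :
    HasSum (fun γ => ∑ x ∈ antidiagonal γ, a x.1 * a x.2) (s ^ 2) := by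
  have hmul := ha.summable.mul_of_nonneg ha.summable ha₀ ha₀
  have hcauchy := ha.summable.tsum_mul_tsum_eq_tsum_sum_antidiagonal ha.summable hmul
  rw [sq, ← ha.tsum_eq, hcauchy]
  exact (summable_sum_mul_antidiagonal_of_summable_mul hmul).hasSum

lemma integrable_of_continuous {X E : Type*} [TopologicalSpace X] [CompactSpace X]
    [MeasurableSpace X] [OpensMeasurableSpace X] [NormedAddCommGroup E] {μ : Measure X}
    [IsFiniteMeasureOnCompacts μ] {g : X → E} (hg : Continuous g) : Integrable g μ :=
  hg.integrable_of_hasCompactSupport (HasCompactSupport.of_compactSpace g)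

/-- Interpolation of `L²` between `L¹` and `L⁴`, by integrating `3 s² x² ≤ 2 s³ x + x⁴` for
`s = K ‖f‖₂`. -/
lemma sqrt_integral_sq_le_of_integral_pow_four_le {X : Type*} [MeasurableSpace X] {μ : Measure X}
    {f : X → ℝ} (hf₀ : 0 ≤ f) (hf₁ : Integrable f μ) (hf₂ : Integrable (fun x => f x ^ 2) μ)
    (hf₄ : Integrable (fun x => f x ^ 4) μ) {K : ℝ} (hK : 0 < K)
    (hle : ∫ x, f x ^ 4 ∂μ ≤ K ^ 2 * (∫ x, f x ^ 2 ∂μ) ^ 2) :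
    √(∫ x, f x ^ 2 ∂μ) ≤ K * ∫ x, f x ∂μ := by
  have hint (s : ℝ) (hs : 0 ≤ s) :
      3 * s ^ 2 * ∫ x, f x ^ 2 ∂μ ≤ 2 * s ^ 3 * ∫ x, f x ∂μ + ∫ x, f x ^ 4 ∂μ := by
    rw [← integral_const_mul, ← integral_const_mul, ← integral_add (hf₁.const_mul _) hf₄]
    refine integral_mono (hf₂.const_mul _) ((hf₁.const_mul _).add hf₄) fun x => ?_
    have : 0 ≤ f x * (f x - s) ^ 2 * (f x + 2 * s) := by
      have : 0 ≤ f x := hf₀ x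
      positivity
    change 3 * s ^ 2 * f x ^ 2 ≤ 2 * s ^ 3 * f x + f x ^ 4
    linarith
  set r := √(∫ x, f x ^ 2 ∂μ) with hr
  have hr₀ : 0 ≤ r := Real.sqrt_nonneg _
  rw [← Real.sq_sqrt (integral_nonneg fun x => sq_nonneg (f x)), ← hr] at hle
  have hmain := hint (K * r) (mul_nonneg hK.le hr₀)
  rw [← Real.sq_sqrt (integral_nonneg fun x => sq_nonneg (f x)), ← hr] at hmain
  rcases hr₀.eq_or_lt with hr₀ | hr₀
  · rw [← hr₀]
    exact mul_nonneg hK.le (integral_nonneg hf₀)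
  · refine le_of_mul_le_mul_left ?_ (show 0 < 2 * K ^ 2 * r ^ 3 by positivity)
    linarith

end Estimates

section Torus

open MvPolynomial MeasureTheory UnitAddTorus ComplexConjugate

variable {ι : Type*}

/-- The vector with coordinates `z i * exp (2 π I * t i)`; as `t` runs over the torus it describes
the polytorus through `z`, on which polynomials are trigonometric polynomials in `t`. -/
noncomputable def rotate (z : ι → ℂ) (t : UnitAddTorus ι) : ι → ℂ := fun i => z i * fourier 1 (t i)

lemma norm_rotate_apply (z : ι → ℂ) (t : UnitAddTorus ι) (i : ι) : ‖rotate z t i‖ = ‖z i‖ := by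
  rw [rotate, norm_mul, fourier_apply, Circle.norm_coe, mul_one]

lemma continuous_rotate (z : ι → ℂ) : Continuous (rotate z) := by
  unfold rotate
  fun_prop

lemma continuous_eval_rotate (P : MvPolynomial ι ℂ) (z : ι → ℂ) :
    Continuous fun t => eval (rotate z t) P :=
  (MvPolynomial.continuous_eval P).comp (continuous_rotate z)

/-- The Haar probability measure on the torus `(ℝ / ℤ)^ι`. -/
noncomputable abbrev torusMeasure (ι : Type*) [Fintype ι] : Measure (UnitAddTorus ι) :=
  Measure.pi fun _ => AddCircle.haarAddCircle

variable [Fintype ι]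

lemma integral_fourier {T : ℝ} [Fact (0 < T)] (n : ℤ) :
    ∫ t : AddCircle T, fourier n t ∂AddCircle.haarAddCircle = if n = 0 then 1 else 0 := by
  have h := congrFun (fourierCoeff_fourier (T := T) n) 0
  simpa only [fourierCoeff, neg_zero, fourier_zero, one_smul, Pi.single_apply, eq_comm] using h

lemma integral_mFourier (n : ι → ℤ) :
    ∫ t, mFourier n t ∂torusMeasure ι = if n = 0 then 1 else 0 := by
  simp only [mFourier, ContinuousMap.coe_mk]
  rw [integral_fintype_prod_eq_prod]
  simp only [integral_fourier, prod_ite_zero, prod_const_one, mem_univ, true_implies,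
    funext_iff, Pi.zero_apply]

lemma integral_mFourier_mul_conj_mFourier (m n : ι → ℤ) :
    ∫ t, mFourier m t * conj (mFourier n t) ∂torusMeasure ι = if m = n then 1 else 0 := by
  simp only [← mFourier_neg, ← mFourier_add, integral_mFourier, ← sub_eq_add_neg, sub_eq_zero]

lemma fourier_one_pow (k : ℕ) (s : UnitAddCircle) : fourier 1 s ^ k = fourier (k : ℤ) s := by
  simp only [fourier_apply, one_smul, natCast_zsmul, AddCircle.toCircle_nsmul, Circle.coe_pow]

lemma eval_rotate (P : MvPolynomial ι ℂ) (z : ι → ℂ) (t : UnitAddTorus ι) :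
    eval (rotate z t) P =
      ∑ α ∈ P.support, (coeff α P * ∏ i, z i ^ α i) * mFourier (fun i => (α i : ℤ)) t := by
  simp only [eval_eq', rotate, mul_pow, prod_mul_distrib, mFourier, ContinuousMap.coe_mk,
    fourier_one_pow, mul_assoc]

lemma integral_eval_rotate_mul_conj_mFourier (P : MvPolynomial ι ℂ) (z : ι → ℂ) (α : ι →₀ ℕ) :
    ∫ t, eval (rotate z t) P * conj (mFourier (fun i => (α i : ℤ)) t) ∂torusMeasure ι =
      coeff α P * ∏ i, z i ^ α i := by
  classical
  have hinj (β : ι →₀ ℕ) : (fun i => (β i : ℤ)) = (fun i => (α i : ℤ)) ↔ β = α := by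
    simp [funext_iff, Finsupp.ext_iff]
  simp only [eval_rotate, sum_mul]
  rw [integral_finsetSum _ fun β _ => integrable_of_continuous (by fun_prop)]
  simp only [mul_assoc (_ * _ : ℂ), integral_const_mul, integral_mFourier_mul_conj_mFourier, hinj,
    mul_ite, mul_one, mul_zero, sum_ite_eq']
  split_ifs with h
  · rfl
  · rw [notMem_support_iff.1 h, zero_mul]

lemma norm_coeff_mul_prod_le {P : MvPolynomial ι ℂ} {z : ι → ℂ} {B : ℝ}
    (hB : ∀ t, ‖eval (rotate z t) P‖ ≤ B) (α : ι →₀ ℕ) :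
    ‖coeff α P‖ * ∏ i, ‖z i‖ ^ α i ≤ B := by
  have hint := norm_integral_le_of_norm_le_const (μ := torusMeasure ι) (C := B)
    (f := fun t => eval (rotate z t) P * conj (mFourier (fun i => (α i : ℤ)) t))
    (.of_forall fun t => ?_)
  · simpa [integral_eval_rotate_mul_conj_mFourier] using hint
  · have hunit : ‖mFourier (fun i => (α i : ℤ)) t‖ = 1 := by
      simp only [mFourier, ContinuousMap.coe_mk, norm_prod, fourier_apply, Circle.norm_coe,
        prod_const_one]
    rw [norm_mul, RCLike.norm_conj, hunit, mul_one]
    exact hB t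

lemma hasSum_sq_norm_coeff_mul_prod (P : MvPolynomial ι ℂ) (z : ι → ℂ) :
    HasSum (fun α : ι →₀ ℕ => (‖coeff α P‖ * ∏ i, ‖z i‖ ^ α i) ^ 2)
      (∫ t, ‖eval (rotate z t) P‖ ^ 2 ∂torusMeasure ι) := by
  have hint : ∫ t, ‖eval (rotate z t) P‖ ^ 2 ∂torusMeasure ι =
      ∑ α ∈ P.support, (‖coeff α P‖ * ∏ i, ‖z i‖ ^ α i) ^ 2 := by
    rw [← Complex.ofReal_inj, ← integral_complex_ofReal]
    calc ∫ t, ((‖eval (rotate z t) P‖ ^ 2 : ℝ) : ℂ) ∂torusMeasure ι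
        = ∫ t, ∑ α ∈ P.support, conj (coeff α P * ∏ i, z i ^ α i) *
            (eval (rotate z t) P * conj (mFourier (fun i => (α i : ℤ)) t)) ∂torusMeasure ι := by
          refine integral_congr_ae (.of_forall fun t => ?_)
          simp only [Complex.ofReal_pow, ← Complex.mul_conj', mul_left_comm _ (eval (rotate z t) P),
            ← mul_sum, ← map_mul, ← map_sum, ← eval_rotate]
      _ = ∑ α ∈ P.support, conj (coeff α P * ∏ i, z i ^ α i) *
            (coeff α P * ∏ i, z i ^ α i) := by
          have hcont := continuous_eval_rotate P z
          rw [integral_finsetSum _ fun α _ => integrable_of_continuous (by fun_prop)]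
          simp only [integral_const_mul, integral_eval_rotate_mul_conj_mFourier]
      _ = _ := by
          simp only [Complex.conj_mul', norm_mul, norm_prod, norm_pow, Complex.ofReal_sum,
            Complex.ofReal_pow]
  rw [hint]
  refine hasSum_sum_of_ne_finset_zero fun α hα => ?_
  rw [notMem_support_iff.1 hα, norm_zero, zero_mul, zero_pow two_ne_zero]

variable [DecidableEq ι] in
lemma sq_norm_coeff_sq_mul_prod_le {P : MvPolynomial ι ℂ} {m : ℕ} (hP : P.IsHomogeneous m)
    (z : ι → ℂ) (γ : ι →₀ ℕ) :
    (‖coeff γ (P ^ 2)‖ * ∏ i, ‖z i‖ ^ γ i) ^ 2 ≤ 4 ^ m * ∑ x ∈ antidiagonal γ,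
      (‖coeff x.1 P‖ * ∏ i, ‖z i‖ ^ x.1 i) ^ 2 * (‖coeff x.2 P‖ * ∏ i, ‖z i‖ ^ x.2 i) ^ 2 := by
  by_cases hγ : γ.degree = m * 2
  swap
  · rw [(hP.pow 2).coeff_eq_zero hγ, norm_zero, zero_mul, zero_pow two_ne_zero]
    positivity
  have hle : ‖coeff γ (P ^ 2)‖ * ∏ i, ‖z i‖ ^ γ i ≤ ∑ x ∈ antidiagonal γ,
      (‖coeff x.1 P‖ * ∏ i, ‖z i‖ ^ x.1 i) * (‖coeff x.2 P‖ * ∏ i, ‖z i‖ ^ x.2 i) := by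
    rw [sq, coeff_mul]
    refine (mul_le_mul_of_nonneg_right (norm_sum_le _ _) (by positivity)).trans_eq ?_
    rw [sum_mul]
    refine sum_congr rfl fun x hx => ?_
    rw [← mem_antidiagonal.1 hx, norm_mul]
    simp only [Finsupp.add_apply, pow_add, prod_mul_distrib]
    ring
  have hcard : (#(antidiagonal γ) : ℝ) ≤ 4 ^ m := by
    have h := card_finsupp_antidiagonal_le γ
    rw [hγ, mul_comm, pow_mul] at h
    exact_mod_cast h
  calc _ ≤ _ := pow_le_pow_left₀ (by positivity) hle 2
    _ ≤ _ := sq_sum_le_card_mul_sum_sq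
    _ ≤ _ := by
      simp only [mul_pow (_ * _ : ℝ)]
      gcongr

lemma integral_norm_eval_rotate_pow_four_le {P : MvPolynomial ι ℂ} {m : ℕ}
    (hP : P.IsHomogeneous m) (z : ι → ℂ) :
    ∫ t, ‖eval (rotate z t) P‖ ^ 4 ∂torusMeasure ι ≤
      4 ^ m * (∫ t, ‖eval (rotate z t) P‖ ^ 2 ∂torusMeasure ι) ^ 2 := by
  classical
  have hP₁ := hasSum_sum_antidiagonal_mul_self (fun _ => sq_nonneg _)
    (hasSum_sq_norm_coeff_mul_prod P z)
  have hP₂ := hasSum_sq_norm_coeff_mul_prod (P ^ 2) z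
  simp only [map_pow, norm_pow, ← pow_mul] at hP₂
  exact hasSum_le (sq_norm_coeff_sq_mul_prod_le hP z) hP₂ (hP₁.mul_left _)

lemma sqrt_integral_sq_norm_eval_rotate_le {P : MvPolynomial ι ℂ} {m : ℕ}
    (hP : P.IsHomogeneous m) (z : ι → ℂ) :
    √(∫ t, ‖eval (rotate z t) P‖ ^ 2 ∂torusMeasure ι) ≤
      2 ^ m * ∫ t, ‖eval (rotate z t) P‖ ∂torusMeasure ι := by
  have hcont := (continuous_eval_rotate P z).norm
  refine sqrt_integral_sq_le_of_integral_pow_four_le (fun t => norm_nonneg _)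
    (integrable_of_continuous hcont) (integrable_of_continuous (hcont.pow 2))
    (integrable_of_continuous (hcont.pow 4)) (by positivity) ?_
  rw [← pow_mul, mul_comm m 2, pow_mul]
  norm_num only
  exact integral_norm_eval_rotate_pow_four_le hP z

lemma eval_majorant_le_integral_norm {P : MvPolynomial ι ℂ} {m : ℕ} (hP : P.IsHomogeneous m)
    (z : ι → ℂ) : eval (fun i => ‖z i‖) (majorant P) ≤
      √((Fintype.card ι).multichoose m) * 2 ^ m * ∫ t, ‖eval (rotate z t) P‖ ∂torusMeasure ι := by
  classical
  have hcard : (#(finsuppAntidiag (univ : Finset ι) m) : ℝ) = (Fintype.card ι).multichoose m := by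
    rw [card_finsuppAntidiag_nat_eq_multichoose, card_univ]
  rw [eval_eq_sum_finsuppAntidiag (isHomogeneous_majorant hP), mul_assoc, ← hcard]
  simp only [coeff_majorant]
  calc ∑ α ∈ finsuppAntidiag univ m, ‖coeff α P‖ * ∏ i, ‖z i‖ ^ α i
      ≤ √(#(finsuppAntidiag (univ : Finset ι) m) *
          ∑ α ∈ finsuppAntidiag univ m, (‖coeff α P‖ * ∏ i, ‖z i‖ ^ α i) ^ 2) :=
        Real.le_sqrt_of_sq_le sq_sum_le_card_mul_sum_sq
    _ ≤ √(#(finsuppAntidiag (univ : Finset ι) m)) *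
          √(∫ t, ‖eval (rotate z t) P‖ ^ 2 ∂torusMeasure ι) := by
        rw [Real.sqrt_mul (Nat.cast_nonneg _)]
        gcongr
        exact sum_le_hasSum _ (fun _ _ => sq_nonneg _) (hasSum_sq_norm_coeff_mul_prod P z)
    _ ≤ _ := by
        gcongr
        exact sqrt_integral_sq_norm_eval_rotate_le hP z

end Torus

section HomogeneousPolynomials

open MvPolynomial MeasureTheory

variable {ι : Type*} [Fintype ι]

lemma rpow_sum_mul_prod_pow_le [DecidableEq ι] {q D : ℝ} {m : ℕ} {e : (ι →₀ ℕ) → ℝ} {x : ι → ℝ}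
    (hq : 1 ≤ q) (hD : 0 ≤ D) (he₀ : 0 ≤ e) (hx₀ : 0 ≤ x)
    (he : ∀ β ∈ finsuppAntidiag univ m, e β ^ q ≤ D * Nat.multinomial univ β)
    (hx : ∑ i, x i ^ q ≤ 1) :
    (∑ β ∈ finsuppAntidiag univ m, e β * ∏ i, x i ^ β i) ^ q ≤
      ((Fintype.card ι).multichoose m : ℝ) ^ (q - 1) * D := by
  have hx₁ (β : ι →₀ ℕ) : 0 ≤ ∏ i, x i ^ β i := prod_nonneg fun i _ => pow_nonneg (hx₀ i) _
  have hxq (i : ι) : 0 ≤ x i ^ q := Real.rpow_nonneg (hx₀ i) q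
  rw [← card_univ, ← card_finsuppAntidiag_nat_eq_multichoose]
  set I : Finset (ι →₀ ℕ) := finsuppAntidiag univ m
  calc (∑ β ∈ I, e β * ∏ i, x i ^ β i) ^ q
      ≤ (#I : ℝ) ^ (q - 1) * ∑ β ∈ I, (e β * ∏ i, x i ^ β i) ^ q :=
        Real.rpow_sum_le_const_mul_sum_rpow_of_nonneg _ hq fun β _ => mul_nonneg (he₀ β) (hx₁ β)
    _ = (#I : ℝ) ^ (q - 1) * ∑ β ∈ I, e β ^ q * ∏ i, (x i ^ q) ^ β i := by
        congr 1
        refine sum_congr rfl fun β _ => ?_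
        rw [Real.mul_rpow (he₀ β) (hx₁ β),
          ← Real.finsetProd_rpow _ _ fun i _ => pow_nonneg (hx₀ i) _]
        simp only [← Real.rpow_pow_comm (hx₀ _)]
    _ ≤ (#I : ℝ) ^ (q - 1) * ∑ β ∈ I, D * Nat.multinomial univ β * ∏ i, (x i ^ q) ^ β i := by
        gcongr with β hβ
        · exact prod_nonneg fun i _ => pow_nonneg (hxq i) _
        · exact he β hβ
    _ = (#I : ℝ) ^ (q - 1) * (D * (∑ i, x i ^ q) ^ m) := by
        simp only [mul_assoc]
        rw [← mul_sum, sum_multinomial_mul_prod_pow]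
    _ ≤ (#I : ℝ) ^ (q - 1) * D := by
        gcongr
        exact mul_le_of_le_one_right hD (pow_le_one₀ (sum_nonneg fun i _ => hxq i) hx)

variable {p : ℝ≥0∞} [Fact (1 ≤ p)]

lemma norm_toLp_le_of_norm_le {x y : ι → ℂ} (h : ∀ i, ‖x i‖ ≤ ‖y i‖) :
    ‖WithLp.toLp p x‖ ≤ ‖WithLp.toLp p y‖ := by
  rcases eq_or_ne p ∞ with rfl | hp
  · rw [PiLp.norm_eq_ciSup, PiLp.norm_eq_ciSup]
    rcases isEmpty_or_nonempty ι with _ | _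
    · simp only [Real.iSup_of_isEmpty, le_refl]
    · exact ciSup_mono (Set.finite_range _).bddAbove h
  · have hp₀ : 0 < p.toReal := ENNReal.toReal_pos (zero_lt_one.trans_le Fact.out).ne' hp
    rw [PiLp.norm_eq_sum hp₀, PiLp.norm_eq_sum hp₀]
    gcongr with i
    exact h i

lemma sum_norm_rpow_le_one (hp : p ≠ ∞) {u : PiLp p fun _ : ι => ℂ} (hu : ‖u‖ ≤ 1) :
    ∑ i, ‖u i‖ ^ p.toReal ≤ 1 := by
  have hp₀ : 0 < p.toReal := ENNReal.toReal_pos (zero_lt_one.trans_le Fact.out).ne' hp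
  rwa [PiLp.norm_eq_sum hp₀, one_div, Real.rpow_inv_le_iff_of_pos (by positivity) zero_le_one hp₀,
    Real.one_rpow] at hu

lemma sum_norm_mul_norm_eval_pderiv_le {P : MvPolynomial ι ℂ} {B : ℝ}
    (hB : ∀ z : PiLp p fun _ : ι => ℂ, ‖z‖ ≤ 2 → ‖eval z.ofLp P‖ ≤ B)
    {y z : PiLp p fun _ : ι => ℂ} (hy : ‖y‖ ≤ 1) (hz : ‖z‖ ≤ 1) :
    ∑ k, ‖y k‖ * ‖eval z.ofLp (pderiv k P)‖ ≤ B := by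
  choose w hw hwd using fun k => Complex.exists_norm_eq_mul_self (y k * eval z.ofLp (pderiv k P))
  have hwy : ‖WithLp.toLp p fun k => w k * y k‖ ≤ ‖y‖ :=
    norm_toLp_le_of_norm_le (y := y.ofLp) fun k => by rw [norm_mul, hw, one_mul]
  have hgrad := norm_sum_mul_eval_pderiv_le (z := z.ofLp) (y := fun k => w k * y k) (P := P)
    (B := B) fun t ht => hB (z + t • WithLp.toLp p fun k => w k * y k) ?_
  · simp only [mul_assoc, ← hwd, ← Complex.ofReal_sum] at hgrad
    rw [Complex.norm_of_nonneg (sum_nonneg fun k _ => norm_nonneg _)] at hgrad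
    simpa only [norm_mul] using hgrad
  · calc _ ≤ ‖z‖ + ‖t • WithLp.toLp p fun k => w k * y k‖ := norm_add_le _ _
      _ ≤ 1 + 1 := by
        rw [norm_smul, ht, one_mul]
        gcongr
        exact hwy.trans hy
      _ = 2 := one_add_one_eq_two

lemma eval_majorant_le_sqrt_multichoose {P : MvPolynomial ι ℂ} {m : ℕ} {B : ℝ}
    (hP : P.IsHomogeneous (m + 1))
    (hB : ∀ z : PiLp p fun _ : ι => ℂ, ‖z‖ ≤ 2 → ‖eval z.ofLp P‖ ≤ B)
    {u : PiLp p fun _ : ι => ℂ} (hu : ‖u‖ ≤ 1) :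
    eval (fun i => ‖u i‖) (majorant P) ≤ √((Fintype.card ι).multichoose m) * 2 ^ m * B := by
  have hgrad (t : UnitAddTorus ι) :
      ∑ k, ‖u k‖ * ‖eval (rotate u.ofLp t) (pderiv k P)‖ ≤ B := by
    refine sum_norm_mul_norm_eval_pderiv_le hB hu (z := WithLp.toLp p (rotate u.ofLp t)) ?_
    exact (norm_toLp_le_of_norm_le (y := u.ofLp) fun i => (norm_rotate_apply _ t i).le).trans hu
  have hint (k : ι) : Integrable (fun t => ‖u k‖ * ‖eval (rotate u.ofLp t) (pderiv k P)‖)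
      (torusMeasure ι) :=
    integrable_of_continuous ((continuous_eval_rotate _ _).norm.const_mul _)
  calc eval (fun i => ‖u i‖) (majorant P)
      ≤ ∑ k, ‖u k‖ * eval (fun i => ‖u i‖) (majorant (pderiv k P)) :=
        eval_majorant_le_sum_pderiv hP fun i => norm_nonneg _
    _ ≤ ∑ k, ‖u k‖ * (√((Fintype.card ι).multichoose m) * 2 ^ m *
          ∫ t, ‖eval (rotate u.ofLp t) (pderiv k P)‖ ∂torusMeasure ι) := by
        gcongr with k
        exact eval_majorant_le_integral_norm hP.pderiv _
    _ = √((Fintype.card ι).multichoose m) * 2 ^ m *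
          ∫ t, ∑ k, ‖u k‖ * ‖eval (rotate u.ofLp t) (pderiv k P)‖ ∂torusMeasure ι := by
        rw [integral_finsetSum _ fun k _ => hint k, mul_sum]
        refine sum_congr rfl fun k _ => ?_
        rw [integral_const_mul]
        ring
    _ ≤ √((Fintype.card ι).multichoose m) * 2 ^ m * ∫ _, B ∂torusMeasure ι := by
        gcongr
        · exact integrable_finsetSum _ fun k _ => hint k
        · exact integrable_const _
        · exact hgrad
    _ = √((Fintype.card ι).multichoose m) * 2 ^ m * B := by
        rw [integral_const, probReal_univ, one_smul]

/-- Cauchy's estimate for `coeff β Q` on the polytorus of radii `(β i / m) ^ (1 / p)`. -/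
lemma norm_coeff_rpow_le (hp : p ≠ ∞) {Q : MvPolynomial ι ℂ} {B : ℝ}
    (hB : ∀ z : PiLp p fun _ : ι => ℂ, ‖z‖ ≤ 1 → ‖eval z.ofLp Q‖ ≤ B) (β : ι →₀ ℕ) :
    ‖coeff β Q‖ ^ p.toReal ≤
      B ^ p.toReal * (Real.exp (∑ i, β i : ℕ) * Nat.multinomial univ β) := by
  have hp₀ : 0 < p.toReal := ENNReal.toReal_pos (zero_lt_one.trans_le Fact.out).ne' hp
  set m := ∑ i, β i
  set r : ι → ℝ := fun i => (β i / m : ℝ) ^ p.toReal⁻¹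
  have hr₀ (i : ι) : 0 ≤ r i := by positivity
  have hrp (i : ι) : r i ^ p.toReal = β i / m := Real.rpow_inv_rpow (by positivity) hp₀.ne'
  have hnorm (t : UnitAddTorus ι) : ‖WithLp.toLp p (rotate (fun i => (r i : ℂ)) t)‖ ≤ 1 := by
    rw [PiLp.norm_eq_sum hp₀]
    refine Real.rpow_le_one (by positivity) ?_ (by positivity)
    simp only [norm_rotate_apply, Complex.norm_of_nonneg (hr₀ _), hrp, ← sum_div]
    rw [← Nat.cast_sum]
    exact div_self_le_one _
  have hbound (t : UnitAddTorus ι) : ‖eval (rotate (fun i => (r i : ℂ)) t) Q‖ ≤ B :=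
    hB (WithLp.toLp p _) (hnorm t)
  have hcoeff := norm_coeff_mul_prod_le hbound β
  simp only [Complex.norm_of_nonneg (hr₀ _)] at hcoeff
  have hprod : (∏ i, r i ^ β i) ^ p.toReal = (∏ i, (β i : ℝ) ^ β i) / (m : ℝ) ^ m := by
    rw [← Real.finsetProd_rpow _ _ fun i _ => pow_nonneg (hr₀ i) _]
    simp only [← Real.rpow_pow_comm (hr₀ _), hrp, div_pow]
    rw [prod_div_distrib, prod_pow_eq_pow_sum]
  have hprod₀ : 0 < (∏ i, (β i : ℝ) ^ β i) := prod_pos fun i _ => mod_cast Nat.pow_self_pos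
  have hm₀ : (0 : ℝ) < (m : ℝ) ^ m := mod_cast Nat.pow_self_pos
  have hrpow := Real.rpow_le_rpow (by positivity) hcoeff hp₀.le
  rw [Real.mul_rpow (norm_nonneg _) (prod_nonneg fun i _ => pow_nonneg (hr₀ i) _), hprod,
    mul_div_assoc', div_le_iff₀ hm₀] at hrpow
  have hB₀ : 0 ≤ B := (norm_nonneg _).trans (hB 0 (by rw [norm_zero]; exact zero_le_one))
  refine le_of_mul_le_mul_right (hrpow.trans ?_) hprod₀
  calc B ^ p.toReal * (m : ℝ) ^ m
      ≤ B ^ p.toReal * (Real.exp m * Nat.multinomial univ β * ∏ i, (β i : ℝ) ^ β i) := by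
        gcongr
        exact sum_pow_sum_le_exp_mul_multinomial univ β
    _ = _ := by ring

lemma sum_mul_norm_coeff_pderiv_rpow_le (hp : p ≠ ∞) {P : MvPolynomial ι ℂ} {B : ℝ}
    (hB : ∀ z : PiLp p fun _ : ι => ℂ, ‖z‖ ≤ 2 → ‖eval z.ofLp P‖ ≤ B)
    {u : PiLp p fun _ : ι => ℂ} (hu : ‖u‖ ≤ 1) (β : ι →₀ ℕ) :
    (∑ k, ‖u k‖ * ‖coeff β (pderiv k P)‖) ^ p.toReal ≤
      B ^ p.toReal * (Real.exp (∑ i, β i : ℕ) * Nat.multinomial univ β) := by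
  choose w hw hwd using fun k => Complex.exists_norm_eq_mul_self (u k * coeff β (pderiv k P))
  set Q : MvPolynomial ι ℂ := ∑ k, C (w k * u k) * pderiv k P with hQ
  have hcoeff : coeff β Q = ((∑ k, ‖u k‖ * ‖coeff β (pderiv k P)‖ : ℝ) : ℂ) := by
    rw [hQ, coeff_sum, Complex.ofReal_sum]
    refine sum_congr rfl fun k _ => ?_
    rw [coeff_C_mul, mul_assoc, ← hwd, norm_mul]
  have hbound (z : PiLp p fun _ : ι => ℂ) (hz : ‖z‖ ≤ 1) : ‖eval z.ofLp Q‖ ≤ B := by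
    refine le_trans ?_ (sum_norm_mul_norm_eval_pderiv_le hB hu hz)
    simp only [hQ, map_sum, map_mul, eval_C]
    refine (norm_sum_le _ _).trans_eq (sum_congr rfl fun k _ => ?_)
    rw [norm_mul, norm_mul, hw, one_mul]
  have hmain := norm_coeff_rpow_le hp hbound β
  rwa [hcoeff, Complex.norm_of_nonneg (by positivity)] at hmain

lemma eval_majorant_le_multichoose_rpow (hp : p ≠ ∞) {P : MvPolynomial ι ℂ} {m : ℕ} {B : ℝ}
    (hP : P.IsHomogeneous (m + 1))
    (hB : ∀ z : PiLp p fun _ : ι => ℂ, ‖z‖ ≤ 2 → ‖eval z.ofLp P‖ ≤ B)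
    {u : PiLp p fun _ : ι => ℂ} (hu : ‖u‖ ≤ 1) :
    eval (fun i => ‖u i‖) (majorant P) ≤
      ((Fintype.card ι).multichoose m : ℝ) ^ (1 - 1 / p.toReal) * Real.exp m * B := by
  classical
  have hp₁ : 1 ≤ p.toReal := (ENNReal.dichotomy p).resolve_left hp
  have hp₀ : 0 < p.toReal := zero_lt_one.trans_le hp₁
  have hB₀ : 0 ≤ B := (norm_nonneg _).trans (hB 0 (by rw [norm_zero]; exact zero_le_two))
  have hroot : (Real.exp m) ^ (1 / p.toReal) ≤ Real.exp m := by
    rw [← Real.exp_mul]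
    exact Real.exp_le_exp.2 (mul_le_of_le_one_right m.cast_nonneg (div_le_one_of_le₀ hp₁ hp₀.le))
  have hpow := rpow_sum_mul_prod_pow_le (D := Real.exp m * B ^ p.toReal)
    (e := fun β => ∑ k, ‖u k‖ * ‖coeff β (pderiv k P)‖) (x := fun i => ‖u i‖) (m := m)
    hp₁ (by positivity) (fun β => by positivity) (fun i => norm_nonneg _) (fun β hβ => ?_)
    (sum_norm_rpow_le_one hp hu)
  · calc eval (fun i => ‖u i‖) (majorant P)
        ≤ ∑ k, ‖u k‖ * eval (fun i => ‖u i‖) (majorant (pderiv k P)) :=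
          eval_majorant_le_sum_pderiv hP fun i => norm_nonneg _
      _ = ∑ β ∈ finsuppAntidiag univ m,
            (∑ k, ‖u k‖ * ‖coeff β (pderiv k P)‖) * ∏ i, ‖u i‖ ^ β i := by
          simp only [eval_eq_sum_finsuppAntidiag (isHomogeneous_majorant hP.pderiv),
            coeff_majorant, mul_sum, sum_mul, mul_assoc]
          exact sum_comm
      _ ≤ (((Fintype.card ι).multichoose m : ℝ) ^ (p.toReal - 1) *
            (Real.exp m * B ^ p.toReal)) ^ (1 / p.toReal) := by
          rw [one_div]
          exact (Real.le_rpow_inv_iff_of_pos (by positivity) (by positivity) hp₀).2 hpow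
      _ = ((Fintype.card ι).multichoose m : ℝ) ^ (1 - 1 / p.toReal) *
            Real.exp m ^ (1 / p.toReal) * B := by
          rw [Real.mul_rpow (by positivity) (by positivity),
            Real.mul_rpow (by positivity) (by positivity), one_div, Real.rpow_rpow_inv hB₀ hp₀.ne',
            ← Real.rpow_mul (Nat.cast_nonneg _), sub_mul, one_mul, mul_inv_cancel₀ hp₀.ne',
            mul_assoc]
      _ ≤ _ := by gcongr
  · have hcoeff := sum_mul_norm_coeff_pderiv_rpow_le hp hB hu β
    rwa [(mem_finsuppAntidiag.1 hβ).1, mul_left_comm, ← mul_assoc] at hcoeff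

lemma eval_majorant_le_three_pow {P : MvPolynomial ι ℂ} {m : ℕ} {B : ℝ}
    (hP : P.IsHomogeneous (m + 1))
    (hB : ∀ z : PiLp p fun _ : ι => ℂ, ‖z‖ ≤ 2 → ‖eval z.ofLp P‖ ≤ B)
    {u : PiLp p fun _ : ι => ℂ} (hu : ‖u‖ ≤ 1) :
    eval (fun i => ‖u i‖) (majorant P) ≤
      ((Fintype.card ι).multichoose m : ℝ) ^ (1 - 1 / (min p 2).toReal) * 3 ^ m * B := by
  have hB₀ : 0 ≤ B := (norm_nonneg _).trans (hB 0 (by rw [norm_zero]; exact zero_le_two))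
  rcases le_total p 2 with hp | hp
  · have hexp : Real.exp m ≤ 3 ^ m := by
      rw [← Real.exp_one_pow]
      exact pow_le_pow_left₀ (Real.exp_nonneg 1) (Real.exp_one_lt_d9.le.trans (by norm_num)) m
    rw [min_eq_left hp]
    have hp_top : p ≠ ∞ := (hp.trans_lt ENNReal.ofNat_lt_top).ne
    refine (eval_majorant_le_multichoose_rpow hp_top hP hB hu).trans ?_
    gcongr
  · rw [min_eq_right hp, ENNReal.toReal_ofNat, show (1 - 1 / 2 : ℝ) = 1 / 2 by norm_num,
      ← Real.sqrt_eq_rpow]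
    refine (eval_majorant_le_sqrt_multichoose hP hB hu).trans ?_
    gcongr
    norm_num

lemma eval_majorant_le {P : MvPolynomial ι ℂ} {m : ℕ} {A ρ : ℝ} (hP : P.IsHomogeneous (m + 1))
    (hA : ∀ z : PiLp p fun _ : ι => ℂ, ‖z‖ < 1 → ‖eval z.ofLp P‖ ≤ A) (hρ : 0 < ρ)
    {u : PiLp p fun _ : ι => ℂ} (hu : ‖u‖ ≤ ρ) :
    eval (fun i => ‖u i‖) (majorant P) ≤
      ((9 * ρ) ^ (m + 1) * ((Fintype.card ι).multichoose m : ℝ) ^ (1 - 1 / (min p 2).toReal)) *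
        A := by
  have hA₀ : 0 ≤ A := (norm_nonneg _).trans (hA 0 (by rw [norm_zero]; exact zero_lt_one))
  have hB (z : PiLp p fun _ : ι => ℂ) (hz : ‖z‖ ≤ 2) : ‖eval z.ofLp P‖ ≤ 3 ^ (m + 1) * A := by
    have hz' : ‖(3 : ℂ)⁻¹ • z‖ < 1 := by
      rw [norm_smul, norm_inv, Complex.norm_ofNat]
      linarith
    have hscale := hA _ hz'
    rw [WithLp.ofLp_smul, eval_smul_of_isHomogeneous hP, norm_mul, norm_pow, norm_inv,
      Complex.norm_ofNat, inv_pow] at hscale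
    exact (inv_mul_le_iff₀ (by positivity)).1 hscale
  have hu' : ‖(ρ : ℂ)⁻¹ • u‖ ≤ 1 := by
    rw [norm_smul, norm_inv, Complex.norm_of_nonneg hρ.le]
    exact inv_mul_le_one_of_le₀ hu hρ.le
  have huρ : (fun i => ‖u i‖) = ρ • fun i => ‖((ρ : ℂ)⁻¹ • u) i‖ := by
    ext i
    simp only [PiLp.smul_apply, Pi.smul_apply, smul_eq_mul, norm_mul, norm_inv,
      Complex.norm_of_nonneg hρ.le, mul_inv_cancel_left₀ hρ.ne']
  set N : ℝ := ((Fintype.card ι).multichoose m : ℝ) ^ (1 - 1 / (min p 2).toReal)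
  calc eval (fun i => ‖u i‖) (majorant P)
      = ρ ^ (m + 1) * eval (fun i => ‖((ρ : ℂ)⁻¹ • u) i‖) (majorant P) := by
        rw [huρ, eval_smul_of_isHomogeneous (isHomogeneous_majorant hP)]
    _ ≤ ρ ^ (m + 1) * (N * 3 ^ m * (3 ^ (m + 1) * A)) := by
        gcongr
        exact eval_majorant_le_three_pow hP hB hu'
    _ ≤ ρ ^ (m + 1) * (N * 3 ^ (m + 1) * (3 ^ (m + 1) * A)) := by
        gcongr
        · norm_num
        · exact m.le_succ
    _ = (9 * ρ) ^ (m + 1) * N * A := by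
        rw [mul_pow, show (9 : ℝ) = 3 * 3 by norm_num, mul_pow]
        ring

end HomogeneousPolynomials

section Circle

open MeasureTheory ComplexConjugate

/-- The nonnegative kernel `1 + Re (c * exp (-2 π I m t))`; integration against it extracts
`b 0 + c * b m / 2` from the Fourier series `∑ b k * exp (2 π I k t)`, `k ≥ 0`. -/
noncomputable def fejerKernel (m : ℕ) (c : ℂ) (t : UnitAddCircle) : ℝ :=
  1 + (c * fourier (-m : ℤ) t).re

lemma continuous_fejerKernel (m : ℕ) (c : ℂ) : Continuous (fejerKernel m c) := by
  unfold fejerKernel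
  fun_prop

lemma fejerKernel_nonneg (m : ℕ) {c : ℂ} (hc : ‖c‖ = 1) (t : UnitAddCircle) :
    0 ≤ fejerKernel m c t := by
  have hre := (abs_le.1 (Complex.abs_re_le_norm (c * fourier (-m : ℤ) t))).1
  rw [norm_mul, hc, fourier_apply, Circle.norm_coe, one_mul] at hre
  exact neg_le_iff_add_nonneg'.1 hre

lemma integral_fourier_mul_fejerKernel {m : ℕ} (hm : m ≠ 0) (c : ℂ) (k : ℕ) :
    ∫ t, fourier (k : ℤ) t * (fejerKernel m c t : ℂ) ∂AddCircle.haarAddCircle =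
      (if k = 0 then 1 else 0) + c / 2 * if k = m then 1 else 0 := by
  have hexpand (t : UnitAddCircle) : fourier (k : ℤ) t * (fejerKernel m c t : ℂ) =
      fourier (k : ℤ) t + c / 2 * fourier (k + -m : ℤ) t + conj c / 2 * fourier (k + m : ℤ) t := by
    rw [fejerKernel, Complex.ofReal_add, Complex.ofReal_one, Complex.re_eq_add_conj, map_mul,
      ← fourier_neg, neg_neg, fourier_add, fourier_add]
    ring
  have hint {g : UnitAddCircle → ℂ} (hg : Continuous g) : Integrable g AddCircle.haarAddCircle :=
    integrable_of_continuous hg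
  simp only [hexpand]
  rw [integral_add (hint (by fun_prop)) (hint (by fun_prop)),
    integral_add (hint (by fun_prop)) (hint (by fun_prop)), integral_const_mul, integral_const_mul,
    integral_fourier, integral_fourier, integral_fourier, if_neg (show (k + m : ℤ) ≠ 0 by omega),
    mul_zero, add_zero]
  simp only [← sub_eq_add_neg, sub_eq_zero, Nat.cast_inj, Nat.cast_eq_zero]

lemma integral_fejerKernel {m : ℕ} (hm : m ≠ 0) (c : ℂ) :
    ∫ t, fejerKernel m c t ∂AddCircle.haarAddCircle = 1 := by
  have h := integral_fourier_mul_fejerKernel hm c 0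
  simp only [Nat.cast_zero, fourier_zero, one_mul, if_true, if_neg hm.symm, mul_zero,
    add_zero, integral_complex_ofReal] at h
  exact_mod_cast h

lemma exists_norm_add_mul_eq (x y : ℂ) : ∃ c : ℂ, ‖c‖ = 1 ∧ ‖x + c * y‖ = ‖x‖ + ‖y‖ := by
  obtain ⟨v, hv, hvx⟩ := Complex.exists_norm_eq_mul_self x
  obtain ⟨w, hw, hwy⟩ := Complex.exists_norm_eq_mul_self y
  have hv₀ : v ≠ 0 := by
    rw [← norm_ne_zero_iff, hv]
    exact one_ne_zero
  refine ⟨v⁻¹ * w, by rw [norm_mul, norm_inv, hv, hw, inv_one, one_mul], ?_⟩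
  calc ‖x + v⁻¹ * w * y‖ = ‖v * (x + v⁻¹ * w * y)‖ := by rw [norm_mul, hv, one_mul]
    _ = ‖((‖x‖ + ‖y‖ : ℝ) : ℂ)‖ := by
      rw [Complex.ofReal_add, hvx, hwy, mul_add, mul_assoc v⁻¹, mul_inv_cancel_left₀ hv₀]
    _ = ‖x‖ + ‖y‖ := Complex.norm_of_nonneg (by positivity)

lemma integral_mul_fejerKernel {b : ℕ → ℂ} {F : UnitAddCircle → ℂ}
    (hb : Summable fun k => ‖b k‖) (hF : ∀ t, HasSum (fun k => b k * fourier (k : ℤ) t) (F t))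
    {m : ℕ} (hm : m ≠ 0) {c : ℂ} (hc : ‖c‖ = 1) :
    ∫ t, F t * (fejerKernel m c t : ℂ) ∂AddCircle.haarAddCircle = b 0 + c * (b m / 2) := by
  have hcont := continuous_fejerKernel m c
  have hnorm (k : ℕ) (t : UnitAddCircle) :
      ‖b k * (fourier (k : ℤ) t * (fejerKernel m c t : ℂ))‖ = ‖b k‖ * fejerKernel m c t := by
    rw [norm_mul, norm_mul, fourier_apply, Circle.norm_coe, one_mul,
      Complex.norm_of_nonneg (fejerKernel_nonneg m hc t)]
  have hintegral := hasSum_integral_of_summable_integral_norm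
    (μ := AddCircle.haarAddCircle (T := 1))
    (F := fun k t => b k * (fourier (k : ℤ) t * (fejerKernel m c t : ℂ)))
    (fun k => integrable_of_continuous (by fun_prop))
    (by simpa only [hnorm, integral_const_mul, integral_fejerKernel hm, mul_one] using hb)
  have htsum (t : UnitAddCircle) : ∑' k, b k * (fourier (k : ℤ) t * (fejerKernel m c t : ℂ)) =
      F t * (fejerKernel m c t : ℂ) := by
    simpa only [mul_assoc] using ((hF t).mul_right (fejerKernel m c t : ℂ)).tsum_eq
  simp only [integral_const_mul, integral_fourier_mul_fejerKernel hm, htsum] at hintegral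
  have hterms := (hasSum_ite_eq (0 : ℕ) (b 0)).add (hasSum_ite_eq m (c * (b m / 2)))
  refine hintegral.unique (hterms.congr_fun fun k => ?_)
  split_ifs with h₀ hk hk <;> subst_vars <;> ring

lemma norm_zero_add_half_norm_le {b : ℕ → ℂ} {F : UnitAddCircle → ℂ} {M : ℝ}
    (hb : Summable fun k => ‖b k‖) (hF : ∀ t, HasSum (fun k => b k * fourier (k : ℤ) t) (F t))
    (hM : ∀ t, ‖F t‖ ≤ M) {m : ℕ} (hm : m ≠ 0) : ‖b 0‖ + ‖b m‖ / 2 ≤ M := by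
  obtain ⟨c, hc, hcnorm⟩ := exists_norm_add_mul_eq (b 0) (b m / 2)
  have hK := fejerKernel_nonneg m hc
  calc ‖b 0‖ + ‖b m‖ / 2 = ‖b 0 + c * (b m / 2)‖ := by
        rw [hcnorm, norm_div, Complex.norm_ofNat]
    _ = ‖∫ t, F t * (fejerKernel m c t : ℂ) ∂AddCircle.haarAddCircle‖ := by
        rw [integral_mul_fejerKernel hb hF hm hc]
    _ ≤ ∫ t, M * fejerKernel m c t ∂AddCircle.haarAddCircle := by
        refine norm_integral_le_of_norm_le
          (integrable_of_continuous ((continuous_fejerKernel m c).const_mul M))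
          (.of_forall fun t => ?_)
        rw [norm_mul, Complex.norm_of_nonneg (hK t)]
        exact mul_le_mul_of_nonneg_right (hM t) (hK t)
    _ = M := by rw [integral_const_mul, integral_fejerKernel hm, mul_one]

end Circle

section PowerSeries

open MvPolynomial

variable {ι : Type*} [Fintype ι] [DecidableEq ι]

lemma hasSum_sum_finsuppAntidiag {E : Type*} [AddCommGroup E] [UniformSpace E]
    [IsUniformAddGroup E] [CompleteSpace E] [T2Space E] {F : (ι → ℕ) → E} {s : E}
    (hF : HasSum F s) : HasSum (fun m => ∑ α ∈ finsuppAntidiag univ m, F α) s := by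
  have hfinsupp : HasSum (fun α : ι →₀ ℕ => F α) s :=
    Finsupp.equivFunOnFinite.hasSum_iff.2 hF
  refine (hfinsupp.tsum_fiberwise fun α => ∑ i, α i).congr_fun fun m => ?_
  have hfibre : (fun α : ι →₀ ℕ => ∑ i, α i) ⁻¹' {m} =
      (finsuppAntidiag univ m : Finset (ι →₀ ℕ)) := by
    ext α
    simp [mem_finsuppAntidiag]
  rw [hfibre, Finset.tsum_subtype' (finsuppAntidiag univ m) fun α : ι →₀ ℕ => F α]

/-- The part of degree `m` of the power series `∑ a_α z^α`. -/
noncomputable def homogeneousPart (a : (ι → ℕ) → ℂ) (m : ℕ) : MvPolynomial ι ℂ :=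
  ∑ α ∈ finsuppAntidiag univ m, monomial α (a α)

lemma coeff_homogeneousPart {a : (ι → ℕ) → ℂ} {m : ℕ} {α : ι →₀ ℕ}
    (hα : α ∈ finsuppAntidiag univ m) : coeff α (homogeneousPart a m) = a α := by
  rw [homogeneousPart, coeff_sum]
  simp only [coeff_monomial, sum_ite_eq', hα, if_true]

lemma isHomogeneous_homogeneousPart (a : (ι → ℕ) → ℂ) (m : ℕ) :
    (homogeneousPart a m).IsHomogeneous m := by
  refine IsHomogeneous.sum _ _ _ fun α hα => isHomogeneous_monomial _ ?_
  rw [Finsupp.degree_eq_sum, (mem_finsuppAntidiag.1 hα).1]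

lemma eval_homogeneousPart (a : (ι → ℕ) → ℂ) (m : ℕ) (z : ι → ℂ) :
    eval z (homogeneousPart a m) = ∑ α ∈ finsuppAntidiag univ m, a α * ∏ i, z i ^ α i := by
  rw [eval_eq_sum_finsuppAntidiag (isHomogeneous_homogeneousPart a m)]
  exact sum_congr rfl fun α hα => by rw [coeff_homogeneousPart hα]

lemma eval_homogeneousPart_zero (a : (ι → ℕ) → ℂ) (z : ι → ℂ) :
    eval z (homogeneousPart a 0) = a 0 := by
  simp [eval_homogeneousPart]

lemma eval_majorant_homogeneousPart (a : (ι → ℕ) → ℂ) (m : ℕ) (z : ι → ℂ) :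
    eval (fun i => ‖z i‖) (majorant (homogeneousPart a m)) =
      ∑ α ∈ finsuppAntidiag univ m, ‖a α * ∏ i, z i ^ α i‖ := by
  rw [eval_eq_sum_finsuppAntidiag (isHomogeneous_majorant (isHomogeneous_homogeneousPart a m))]
  refine sum_congr rfl fun α hα => ?_
  rw [coeff_majorant, coeff_homogeneousPart hα, norm_mul, norm_prod]
  simp only [norm_pow]

variable {p : ℝ≥0∞} [Fact (1 ≤ p)] {f : PiLp p (fun _ : ι => ℂ) → ℂ} {a : (ι → ℕ) → ℂ} {M : ℝ}

lemma norm_zero_add_half_norm_eval_homogeneousPart_le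
    (hf : ∀ z, ‖z‖ < 1 → HasSum (fun α : ι → ℕ => a α * ∏ i, z i ^ α i) (f z))
    (hM : ∀ z, ‖z‖ < 1 → ‖f z‖ ≤ M) {m : ℕ} (hm : m ≠ 0) {z : PiLp p fun _ : ι => ℂ}
    (hz : ‖z‖ < 1) : ‖a 0‖ + ‖eval z.ofLp (homogeneousPart a m)‖ / 2 ≤ M := by
  have hdegree {w : PiLp p fun _ : ι => ℂ} (hw : ‖w‖ < 1) :
      HasSum (fun k => eval w.ofLp (homogeneousPart a k)) (f w) := by
    simpa only [eval_homogeneousPart] using hasSum_sum_finsuppAntidiag (hf w hw)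
  have hrot (t : UnitAddCircle) : ‖(fourier 1 t : ℂ) • z‖ < 1 := by
    rwa [norm_smul, fourier_apply, Circle.norm_coe, one_mul]
  have hseries (t : UnitAddCircle) :
      HasSum (fun k : ℕ => eval z.ofLp (homogeneousPart a k) * fourier (k : ℤ) t)
        (f ((fourier 1 t : ℂ) • z)) := by
    refine (hdegree (hrot t)).congr_fun fun k => ?_
    rw [WithLp.ofLp_smul, eval_smul_of_isHomogeneous (isHomogeneous_homogeneousPart a k),
      fourier_one_pow, mul_comm]
  simpa only [eval_homogeneousPart_zero] using
    norm_zero_add_half_norm_le (hdegree hz).summable.norm hseries (fun t => hM _ (hrot t)) hm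

end PowerSeries

section BohrRadius

open MvPolynomial

lemma exists_hasSum_norm_le {ι : Type*} [Fintype ι] {p : ℝ≥0∞} [Fact (1 ≤ p)]
    {f : PiLp p (fun _ : ι => ℂ) → ℂ} {a : (ι → ℕ) → ℂ} {M : ℝ}
    (hf : ∀ z, ‖z‖ < 1 → HasSum (fun α : ι → ℕ => a α * ∏ i, z i ^ α i) (f z))
    (hM : ∀ z, ‖z‖ < 1 → ‖f z‖ ≤ M) {ρ : ℝ} (hρ : 0 < ρ)
    (hgeom : ∀ m, (9 * ρ) ^ (m + 1) *
      ((Fintype.card ι).multichoose m : ℝ) ^ (1 - 1 / (min p 2).toReal) ≤ (1 / 3) ^ (m + 1))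
    {z : PiLp p fun _ : ι => ℂ} (hz : ‖z‖ ≤ ρ) :
    ∃ s, HasSum (fun α : ι → ℕ => ‖a α * ∏ i, z i ^ α i‖) s ∧ s ≤ M := by
  classical
  have hρ₁ : 9 * ρ ≤ 1 / 3 := by simpa using hgeom 0
  obtain ⟨s, hs⟩ := (hf z (by linarith)).summable.norm
  refine ⟨s, hs, ?_⟩
  have hdegree :
      HasSum (fun m => eval (fun i => ‖z i‖) (majorant (homogeneousPart a m))) s := by
    simpa only [eval_majorant_homogeneousPart] using hasSum_sum_finsuppAntidiag hs
  refine le_of_hasSum_of_le_geometric hdegree fun m => ?_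
  have hzero : eval (fun i => ‖z i‖) (majorant (homogeneousPart a 0)) = ‖a 0‖ := by
    simp [eval_majorant_homogeneousPart]
  have hwiener (w : PiLp p fun _ : ι => ℂ) (hw : ‖w‖ < 1) :
      ‖eval w.ofLp (homogeneousPart a (m + 1))‖ ≤ 2 * (M - ‖a 0‖) := by
    linarith [norm_zero_add_half_norm_eval_homogeneousPart_le hf hM m.succ_ne_zero hw]
  have hnonneg : 0 ≤ 2 * (M - ‖a 0‖) := (norm_nonneg _).trans (hwiener 0 (by simp))
  rw [hzero, mul_comm]
  exact (eval_majorant_le (isHomogeneous_homogeneousPart a (m + 1)) hwiener hρ hz).trans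
    (mul_le_mul_of_nonneg_right (hgeom m) hnonneg)

lemma pNorm_eq_norm_toLp (p : ℝ≥0∞) [Fact (1 ≤ p)] {n : ℕ} (z : Fin n → ℂ) :
    pNorm p z = ‖WithLp.toLp p z‖ := by
  unfold pNorm
  split_ifs with hp
  · subst hp
    rw [PiLp.norm_eq_ciSup]
  · rw [PiLp.norm_eq_sum (ENNReal.toReal_pos (zero_lt_one.trans_le Fact.out).ne' hp)]

lemma one_sub_one_div_toReal_min_mem_Icc {p : ℝ≥0∞} (hp : 1 ≤ p) :
    1 - 1 / (min p 2).toReal ∈ Set.Icc (0 : ℝ) 1 := by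
  have hq : 1 ≤ (min p 2).toReal :=
    ENNReal.toReal_mono (min_lt_of_right_lt ENNReal.ofNat_lt_top).ne
      (le_min hp ENNReal.one_lt_two.le)
  rw [Set.mem_Icc, one_div]
  exact ⟨by linarith [inv_le_one_of_one_le₀ hq], by linarith [inv_nonneg.2 (zero_le_one.trans hq)]⟩

end BohrRadius

/-- Lower bound for the Bohr radius of the unit ball of `ℓ_p^n`: there is `C > 0` such
that, with `r = (1/C)·(log n / n)^{1-1/min(p,2)}`, every bounded holomorphic function
`f(z) = ∑_α a_α z^α` on the open unit ball `B` of `ℓ_p^n` satisfies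
`∑_α |a_α z^α| ≤ sup_{w ∈ B} |f(w)|` whenever `‖z‖_p ≤ r`. -/
theorem bohr_radius_lower_bound :
    ∃ C : ℝ, 0 < C ∧ ∀ (p : ℝ≥0∞), 1 ≤ p → ∀ n : ℕ, 2 ≤ n →
      ∀ (f : (Fin n → ℂ) → ℂ) (a : (Fin n → ℕ) → ℂ),
        (∀ z : Fin n → ℂ, pNorm p z < 1 →
          HasSum (fun α : Fin n → ℕ => a α * ∏ i, z i ^ α i) (f z)) →
        BddAbove {x : ℝ | ∃ w : Fin n → ℂ, pNorm p w < 1 ∧ x = ‖f w‖} →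
        ∀ z : Fin n → ℂ,
          pNorm p z ≤ (1 / C) * (Real.log n / n) ^ (1 - 1 / (min p 2).toReal) →
          ∃ s : ℝ, HasSum (fun α : Fin n → ℕ => ‖a α * ∏ i, z i ^ α i‖) s ∧
            s ≤ sSup {x : ℝ | ∃ w : Fin n → ℂ, pNorm p w < 1 ∧ x = ‖f w‖} := by
  refine ⟨108, by norm_num, fun p hp n hn f a hf hbdd z hz => ?_⟩
  have : Fact (1 ≤ p) := ⟨hp⟩
  simp only [pNorm_eq_norm_toLp] at hf hbdd hz ⊢
  obtain ⟨hσ₀, hσ₁⟩ := one_sub_one_div_toReal_min_mem_Icc hp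
  have hlog : 0 < Real.log n := Real.log_pos (by exact_mod_cast hn)
  set σ := 1 - 1 / (min p 2).toReal
  refine exists_hasSum_norm_le (f := fun w => f w.ofLp) (fun w hw => hf w.ofLp hw)
    (fun w hw => le_csSup hbdd ⟨w.ofLp, hw, rfl⟩) (by positivity) (fun m => ?_) hz
  rw [Fintype.card_fin, ← mul_assoc]
  exact (mul_rpow_log_div_pow_mul_multichoose_le (by norm_num) hσ₀ hσ₁ n m).trans_eq
    (by norm_num)
end

section
/- For all positive integers m and n and every m-linear form A : ℂ^n × ⋯ × ℂ^n → ℂ (m factors), one has (∑_{i₁,…,i_m = 1}^n |A(e_{i₁}, …, e_{i_m})|^{2m/(m+1)})^{(m+1)/(2m)} ≤ (√2)^{m-1} · sup_{x₁,…,x_m ∈ 𝔻^n} |A(x₁, …, x_m)|. (Multilinear Bohnenblust–Hille inequality with the Davie–Kaijser constant.) -/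
open Finset

/-!
Let `a i = ‖A (e_{i 1}, …, e_{i m})‖`. Writing `a ^ (2m)` as `∏ k, S k * ∏ k, a ^ 2 / S k`, where
`S k` is the `ℓ²` norm of the slice of `a` obtained by freezing the `k`-th index, Hölder's
inequality with `m + 1` equal exponents bounds the `ℓ^{2m/(m+1)}` norm of `a` by the geometric mean
over `k` of the mixed norms `∑ j, S k j` (Blei). For each `k`, the Hilbert-valued Khintchine
inequality with constant `√2`, applied to one variable after another, replaces the `ℓ²` norms over
the `m - 1` unfrozen indices by the values of `A` at points of the unit ball, at the cost of
`√2 ^ (m - 1)`; the remaining sum over `j` is an `ℓ¹` norm, dual to the sup norm in the `k`-th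
variable. Khintchine's inequality itself interpolates `L²` between `L¹` and `L⁴`, the fourth moment
of the random sum being at most twice the square of the second one.
-/

namespace BohnenblustHille

open scoped BigOperators

section Moments

lemma sum_sq_pow_three_le {α : Type*} (s : Finset α) {f : α → ℝ} (hf : ∀ x ∈ s, 0 ≤ f x) :
    (∑ x ∈ s, f x ^ 2) ^ 3 ≤ (∑ x ∈ s, f x) ^ 2 * ∑ x ∈ s, f x ^ 4 := by
  have h₂ : 0 ≤ ∑ x ∈ s, f x ^ 2 := by positivity
  have hcube : ∀ x ∈ s, 0 ≤ f x ^ 3 := fun x hx ↦ pow_nonneg (hf x hx) 3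
  have h₂₁₃ : (∑ x ∈ s, f x ^ 2) ^ 2 ≤ (∑ x ∈ s, f x) * ∑ x ∈ s, f x ^ 3 :=
    sum_sq_le_sum_mul_sum_of_sq_le_mul s hf hcube fun x _ ↦ le_of_eq (by ring)
  have h₃₂₄ : (∑ x ∈ s, f x ^ 3) ^ 2 ≤ (∑ x ∈ s, f x ^ 2) * ∑ x ∈ s, f x ^ 4 :=
    sum_sq_le_sum_mul_sum_of_sq_le_mul s (fun x _ ↦ by positivity) (fun x _ ↦ by positivity)
      fun x _ ↦ le_of_eq (by ring)
  rcases h₂.eq_or_lt with h₀ | hpos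
  · rw [← h₀, zero_pow three_ne_zero]
    positivity
  refine le_of_mul_le_mul_left ?_ hpos
  calc (∑ x ∈ s, f x ^ 2) * (∑ x ∈ s, f x ^ 2) ^ 3
      = ((∑ x ∈ s, f x ^ 2) ^ 2) ^ 2 := by ring
    _ ≤ ((∑ x ∈ s, f x) * ∑ x ∈ s, f x ^ 3) ^ 2 := by gcongr
    _ = (∑ x ∈ s, f x) ^ 2 * (∑ x ∈ s, f x ^ 3) ^ 2 := mul_pow _ _ _
    _ ≤ (∑ x ∈ s, f x) ^ 2 * ((∑ x ∈ s, f x ^ 2) * ∑ x ∈ s, f x ^ 4) := by gcongr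
    _ = (∑ x ∈ s, f x ^ 2) * ((∑ x ∈ s, f x) ^ 2 * ∑ x ∈ s, f x ^ 4) := by ring

lemma expect_sq_pow_three_le {α : Type*} (s : Finset α) {f : α → ℝ} (hf : ∀ x ∈ s, 0 ≤ f x) :
    (𝔼 x ∈ s, f x ^ 2) ^ 3 ≤ (𝔼 x ∈ s, f x) ^ 2 * 𝔼 x ∈ s, f x ^ 4 := by
  simp only [expect_eq_sum_div_card, div_pow, div_mul_div_comm, ← pow_succ]
  gcongr
  exact sum_sq_pow_three_le s hf

end Moments

section Khintchine

variable {G : Type*} [AddCommGroup G] {ψ : AddChar G ℂ} {ι : Type*}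

section CharSum

variable {M : Type*} [AddCommMonoid M] [Module ℂ M]

/-- The random sum `∑ k ∈ s, ψ (w k) • a k`, where the `ψ (w k)` with `w` uniform in `ι → G` play
the role of independent Steinhaus variables. -/
def charSum (ψ : AddChar G ℂ) (a : ι → M) (s : Finset ι) (w : ι → G) : M :=
  ∑ k ∈ s, ψ (w k) • a k

lemma charSum_insert_add_single [DecidableEq ι] {s : Finset ι} {k : ι} (hk : k ∉ s)
    (a : ι → M) (w : ι → G) (g : G) : charSum ψ a (insert k s) (w + Pi.single k g) =
      charSum ψ a s w + ψ g • ψ (w k) • a k := by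
  have hs : charSum ψ a s (w + Pi.single k g) = charSum ψ a s w :=
    sum_congr rfl fun l hl ↦ by simp [ne_of_mem_of_not_mem hl hk]
  rw [charSum, sum_insert hk, ← charSum, hs, add_comm, Pi.add_apply, Pi.single_eq_same,
    AddChar.map_add_eq_mul, mul_comm, mul_smul]

end CharSum

variable [Fintype G]

lemma expect_re_addChar_mul (hψ : ψ ≠ 1) (z : ℂ) : 𝔼 g, (ψ g * z).re = 0 := by
  rw [Fintype.expect_eq_sum_div_card, ← Complex.re_sum, ← sum_mul,
    AddChar.sum_eq_zero_of_ne_one hψ]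
  simp

lemma expect_re_addChar_mul_sq (hψ : ψ ^ 2 ≠ 1) (z : ℂ) :
    𝔼 g, (ψ g * z).re ^ 2 = ‖z‖ ^ 2 / 2 := by
  have hre (w : ℂ) : w.re ^ 2 = ‖w‖ ^ 2 / 2 + (w ^ 2).re / 2 := by
    rw [Complex.sq_norm, Complex.normSq_apply, sq w, Complex.mul_re]
    ring
  have hsq (g : G) : (ψ g * z) ^ 2 = (ψ ^ 2) g * z ^ 2 := by
    rw [AddChar.pow_apply, mul_pow]
  simp only [hre, hsq, norm_mul, AddChar.norm_apply, one_mul, expect_add_distrib, ← expect_div,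
    expect_re_addChar_mul hψ, Fintype.expect_const, zero_div, add_zero]

variable {H : Type*} [NormedAddCommGroup H] [InnerProductSpace ℂ H]

lemma norm_add_smul_sq {c : ℂ} (hc : ‖c‖ = 1) (x y : H) :
    ‖x + c • y‖ ^ 2 = ‖x‖ ^ 2 + ‖y‖ ^ 2 + 2 * (c * inner ℂ x y).re := by
  rw [norm_add_sq (𝕜 := ℂ), inner_smul_right, norm_smul, hc, one_mul, RCLike.re_to_complex]
  ring

lemma expect_norm_add_addChar_smul_sq (hψ : ψ ≠ 1) (x y : H) :
    𝔼 g, ‖x + ψ g • y‖ ^ 2 = ‖x‖ ^ 2 + ‖y‖ ^ 2 := by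
  simp only [norm_add_smul_sq (ψ.norm_apply _), expect_add_distrib, ← mul_expect,
    expect_re_addChar_mul hψ, Fintype.expect_const, mul_zero, add_zero]

lemma expect_norm_add_addChar_smul_pow_four_le (hψ : ψ ^ 2 ≠ 1) (x y : H) :
    𝔼 g, ‖x + ψ g • y‖ ^ 4 ≤ ‖x‖ ^ 4 + 4 * ‖x‖ ^ 2 * ‖y‖ ^ 2 + ‖y‖ ^ 4 := by
  have hψ' : ψ ≠ 1 := fun h ↦ hψ (by rw [h, one_pow])
  have hexpand (g : G) : ‖x + ψ g • y‖ ^ 4 = (‖x‖ ^ 2 + ‖y‖ ^ 2) ^ 2 +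
      4 * (‖x‖ ^ 2 + ‖y‖ ^ 2) * (ψ g * inner ℂ x y).re + 4 * (ψ g * inner ℂ x y).re ^ 2 := by
    rw [show ‖x + ψ g • y‖ ^ 4 = (‖x + ψ g • y‖ ^ 2) ^ 2 by ring,
      norm_add_smul_sq (ψ.norm_apply g)]
    ring
  have hCS : ‖inner ℂ x y‖ ^ 2 ≤ (‖x‖ * ‖y‖) ^ 2 := by
    gcongr
    exact norm_inner_le_norm x y
  simp only [hexpand, expect_add_distrib, ← mul_expect, expect_re_addChar_mul hψ',
    expect_re_addChar_mul_sq hψ, Fintype.expect_const]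
  linarith

variable [Fintype ι] [DecidableEq ι]

lemma expect_eq_expect_add_single {M : Type*} [AddCommMonoid M] [Module ℚ≥0 M]
    (f : (ι → G) → M) (k : ι) :
    𝔼 w, f w = 𝔼 w : ι → G, 𝔼 g, f (w + Pi.single k g) := by
  have hshift (g : G) : 𝔼 w : ι → G, f (w + Pi.single k g) = 𝔼 w, f w :=
    Fintype.expect_equiv (Equiv.addRight (Pi.single k g)) _ _ fun _ ↦ rfl
  calc 𝔼 w, f w = 𝔼 g, 𝔼 w : ι → G, f (w + Pi.single k g) := by
        simp only [hshift, Fintype.expect_const]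
    _ = 𝔼 w : ι → G, 𝔼 g, f (w + Pi.single k g) := by rw [expect_comm]

lemma expect_norm_charSum_sq (hψ : ψ ≠ 1) (a : ι → H) (s : Finset ι) :
    𝔼 w, ‖charSum ψ a s w‖ ^ 2 = ∑ k ∈ s, ‖a k‖ ^ 2 := by
  induction s using Finset.induction_on with
  | empty => simp [charSum]
  | insert k s hk ih =>
    rw [expect_eq_expect_add_single _ k]
    simp only [charSum_insert_add_single hk, expect_norm_add_addChar_smul_sq hψ,
      expect_add_distrib, ih, norm_smul, AddChar.norm_apply, one_mul, Fintype.expect_const,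
      sum_insert hk, add_comm]

lemma expect_norm_charSum_pow_four_le (hψ : ψ ^ 2 ≠ 1) (a : ι → H) (s : Finset ι) :
    𝔼 w, ‖charSum ψ a s w‖ ^ 4 ≤ 2 * (∑ k ∈ s, ‖a k‖ ^ 2) ^ 2 := by
  have hψ' : ψ ≠ 1 := fun h ↦ hψ (by rw [h, one_pow])
  induction s using Finset.induction_on with
  | empty => simp [charSum]
  | insert k s hk ih =>
    calc 𝔼 w, ‖charSum ψ a (insert k s) w‖ ^ 4
        = 𝔼 w, 𝔼 g, ‖charSum ψ a s w + ψ g • ψ (w k) • a k‖ ^ 4 := by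
          rw [expect_eq_expect_add_single _ k]
          simp only [charSum_insert_add_single hk]
      _ ≤ 𝔼 w, (‖charSum ψ a s w‖ ^ 4 + 4 * ‖charSum ψ a s w‖ ^ 2 * ‖a k‖ ^ 2 + ‖a k‖ ^ 4) :=
          expect_le_expect fun w _ ↦ by
            simpa only [norm_smul, AddChar.norm_apply, one_mul] using
              expect_norm_add_addChar_smul_pow_four_le hψ (charSum ψ a s w) (ψ (w k) • a k)
      _ = 𝔼 w, ‖charSum ψ a s w‖ ^ 4 + 4 * (∑ k ∈ s, ‖a k‖ ^ 2) * ‖a k‖ ^ 2 + ‖a k‖ ^ 4 := by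
          simp only [expect_add_distrib, ← expect_mul, ← mul_expect, Fintype.expect_const,
            expect_norm_charSum_sq hψ']
      _ ≤ 2 * (∑ k ∈ insert k s, ‖a k‖ ^ 2) ^ 2 := by
          rw [sum_insert hk]
          nlinarith [sq_nonneg (‖a k‖ ^ 2)]

theorem sqrt_sum_norm_sq_le_expect_norm_charSum (hψ : ψ ^ 2 ≠ 1) (a : ι → H) :
    √(∑ k, ‖a k‖ ^ 2) ≤ √2 * 𝔼 w, ‖charSum ψ a univ w‖ := by
  have hψ' : ψ ≠ 1 := fun h ↦ hψ (by rw [h, one_pow])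
  set S := ∑ k, ‖a k‖ ^ 2
  set E := 𝔼 w, ‖charSum ψ a univ w‖
  have hE : 0 ≤ E := expect_nonneg fun w _ ↦ norm_nonneg _
  have hS : 0 ≤ S := by positivity
  have hmoment : S ^ 3 ≤ E ^ 2 * (2 * S ^ 2) :=
    calc S ^ 3 ≤ E ^ 2 * 𝔼 w, ‖charSum ψ a univ w‖ ^ 4 := by
          simpa only [expect_norm_charSum_sq hψ' a univ] using
            expect_sq_pow_three_le univ fun w _ ↦ norm_nonneg (charSum ψ a univ w)
      _ ≤ E ^ 2 * (2 * S ^ 2) := by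
          gcongr
          exact expect_norm_charSum_pow_four_le hψ a univ
  have hSE : S ≤ 2 * E ^ 2 := by
    rcases hS.eq_or_lt with h₀ | hpos
    · rw [← h₀]
      positivity
    · refine le_of_mul_le_mul_right ?_ (pow_pos hpos 2)
      linarith
  calc √S ≤ √(2 * E ^ 2) := Real.sqrt_le_sqrt hSE
    _ = √2 * E := by rw [Real.sqrt_mul zero_le_two, Real.sqrt_sq hE]

end Khintchine

section Blei

open scoped NNReal ENNReal

lemma sum_prod_rpow_le_prod_sum_rpow {ι α : Type*} [Fintype ι] [Fintype α] {f : ι → α → ℝ}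
    (hf : ∀ i x, 0 ≤ f i x) {p : ι → ℝ} (hp : ∀ i, 0 ≤ p i) (hp_sum : ∑ i, p i = 1) :
    ∑ x, ∏ i, f i x ^ p i ≤ ∏ i, (∑ x, f i x) ^ p i := by
  lift f to ι → α → ℝ≥0 using hf
  let _ : MeasurableSpace α := ⊤
  have hHolder := ENNReal.lintegral_prod_norm_pow_le (μ := MeasureTheory.Measure.count)
    univ (f := fun i x ↦ (f i x : ℝ≥0∞)) (fun i _ ↦ by fun_prop) hp_sum fun i _ ↦ hp i
  simp only [MeasureTheory.lintegral_count, tsum_fintype, ← ENNReal.coe_rpow_of_nonneg _ (hp _),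
    ← ENNReal.ofNNReal_finsetSum, ← ENNReal.ofNNReal_finsetProd, ENNReal.coe_le_coe] at hHolder
  simpa only [NNReal.coe_sum, NNReal.coe_prod, NNReal.coe_rpow] using NNReal.coe_le_coe.mpr hHolder

variable {ι : Type*} [Fintype ι] [DecidableEq ι] {κ : ι → Type*}
  [∀ k, Fintype (κ k)] [∀ k, DecidableEq (κ k)]

/-- The `ℓ²` norm of the slice `{I | I k = j}` of the array `a`. -/
noncomputable def sliceNorm (a : (∀ k, κ k) → ℝ) (k : ι) (j : κ k) : ℝ :=
  √(∑ I with I k = j, a I ^ 2)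

lemma sliceNorm_nonneg (a : (∀ k, κ k) → ℝ) (k : ι) (j : κ k) : 0 ≤ sliceNorm a k j :=
  Real.sqrt_nonneg _

lemma abs_le_sliceNorm (a : (∀ k, κ k) → ℝ) (k : ι) (I : ∀ k, κ k) :
    |a I| ≤ sliceNorm a k (I k) :=
  Real.abs_le_sqrt <| single_le_sum (f := fun J ↦ a J ^ 2) (fun _ _ ↦ sq_nonneg _) (by simp)

-- Where `sliceNorm` vanishes, so does `a`, and `0 / 0 = 0` is the intended value.
lemma sum_sq_div_sliceNorm (a : (∀ k, κ k) → ℝ) (k : ι) :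
    ∑ I, a I ^ 2 / sliceNorm a k (I k) = ∑ j, sliceNorm a k j := by
  rw [← sum_fiberwise univ fun I ↦ I k]
  refine sum_congr rfl fun j _ ↦ ?_
  calc ∑ I with I k = j, a I ^ 2 / sliceNorm a k (I k)
      = (∑ I with I k = j, a I ^ 2) / sliceNorm a k j := by
        rw [sum_div]
        exact sum_congr rfl fun I hI ↦ by rw [(mem_filter.mp hI).2]
    _ = sliceNorm a k j := Real.div_sqrt

lemma rpow_eq_prod_sliceNorm_mul [Nonempty ι] {a : (∀ k, κ k) → ℝ} (ha : 0 ≤ a) (I : ∀ k, κ k) :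
    a I ^ (2 * (Fintype.card ι : ℝ) / (Fintype.card ι + 1)) =
      (∏ k, sliceNorm a k (I k)) ^ ((Fintype.card ι : ℝ) + 1)⁻¹ *
        ∏ k, (a I ^ 2 / sliceNorm a k (I k)) ^ ((Fintype.card ι : ℝ) + 1)⁻¹ := by
  rcases (ha I).eq_or_lt with h₀ | hpos
  · rw [← h₀, Pi.zero_apply, Real.zero_rpow (by positivity)]
    simp [Real.zero_rpow (show ((Fintype.card ι : ℝ) + 1)⁻¹ ≠ 0 by positivity)]
  have hslice (k : ι) : 0 < sliceNorm a k (I k) :=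
    hpos.trans_le ((le_abs_self _).trans (abs_le_sliceNorm a k I))
  have hprod : a I ^ (2 * Fintype.card ι) =
      (∏ k, sliceNorm a k (I k)) * ∏ k, a I ^ 2 / sliceNorm a k (I k) := by
    simp only [← prod_mul_distrib, mul_div_cancel₀ _ (hslice _).ne', prod_const, card_univ,
      pow_mul]
  rw [Real.finsetProd_rpow _ _ fun k _ ↦ div_nonneg (sq_nonneg _) (hslice k).le,
    ← Real.mul_rpow (prod_nonneg fun k _ ↦ (hslice k).le)
      (prod_nonneg fun k _ ↦ div_nonneg (sq_nonneg _) (hslice k).le), ← hprod,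
    ← Real.rpow_natCast, ← Real.rpow_mul hpos.le, div_eq_mul_inv]
  push_cast
  rfl

lemma sum_rpow_le_prod_sum_sliceNorm_rpow [Nonempty ι] {a : (∀ k, κ k) → ℝ} (ha : 0 ≤ a) :
    ∑ I, a I ^ (2 * (Fintype.card ι : ℝ) / (Fintype.card ι + 1)) ≤
      (∏ k, ∑ j, sliceNorm a k j) ^ (2 / ((Fintype.card ι : ℝ) + 1)) := by
  set m : ℝ := (Fintype.card ι : ℝ)
  set P := ∏ k, ∑ j, sliceNorm a k j
  have hP : 0 ≤ P := prod_nonneg fun k _ ↦ sum_nonneg fun j _ ↦ sliceNorm_nonneg a k j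
  let F : Option ι → (∀ k, κ k) → ℝ := fun o I ↦
    o.elim (∏ k, sliceNorm a k (I k)) fun k ↦ a I ^ 2 / sliceNorm a k (I k)
  have hF (o : Option ι) (I : ∀ k, κ k) : 0 ≤ F o I := by
    cases o
    · exact prod_nonneg fun k _ ↦ sliceNorm_nonneg _ _ _
    · exact div_nonneg (sq_nonneg _) (sliceNorm_nonneg _ _ _)
  have hexponents : ∑ _o : Option ι, (m + 1)⁻¹ = 1 := by
    rw [sum_const, card_univ, Fintype.card_option, nsmul_eq_mul, Nat.cast_succ,
      mul_inv_cancel₀ (by positivity)]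
  calc ∑ I, a I ^ (2 * m / (m + 1)) = ∑ I, ∏ o, F o I ^ (m + 1)⁻¹ :=
        sum_congr rfl fun I _ ↦ by
          rw [rpow_eq_prod_sliceNorm_mul ha, Fintype.prod_option]
          rfl
    _ ≤ ∏ o, (∑ I, F o I) ^ (m + 1)⁻¹ :=
        sum_prod_rpow_le_prod_sum_rpow hF (fun _ ↦ by positivity) hexponents
    _ = P ^ (m + 1)⁻¹ * P ^ (m + 1)⁻¹ := by
        rw [Fintype.prod_option, Real.finsetProd_rpow _ _ fun k _ ↦ sum_nonneg fun I _ ↦ hF _ I]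
        simp only [F, Option.elim, sum_sq_div_sliceNorm, ← Fintype.prod_sum, P]
    _ = P ^ (2 / (m + 1)) := by
        rw [← Real.rpow_add_of_nonneg hP (by positivity) (by positivity), ← two_mul,
          div_eq_mul_inv]

theorem blei_inequality [Nonempty ι] {a : (∀ k, κ k) → ℝ} (ha : 0 ≤ a) :
    (∑ I, a I ^ (2 * (Fintype.card ι : ℝ) / (Fintype.card ι + 1))) ^
        (((Fintype.card ι : ℝ) + 1) / (2 * Fintype.card ι)) ≤
      (∏ k, ∑ j, sliceNorm a k j) ^ (Fintype.card ι : ℝ)⁻¹ := by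
  set m : ℝ := (Fintype.card ι : ℝ)
  have hm : 0 < m := Nat.cast_pos.mpr Fintype.card_pos
  set P := ∏ k, ∑ j, sliceNorm a k j
  have hP : 0 ≤ P := prod_nonneg fun k _ ↦ sum_nonneg fun j _ ↦ sliceNorm_nonneg a k j
  calc (∑ I, a I ^ (2 * m / (m + 1))) ^ ((m + 1) / (2 * m))
      ≤ (P ^ (2 / (m + 1))) ^ ((m + 1) / (2 * m)) :=
        Real.rpow_le_rpow (sum_nonneg fun I _ ↦ Real.rpow_nonneg (ha I) _)
          (sum_rpow_le_prod_sum_sliceNorm_rpow ha) (by positivity)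
    _ = P ^ m⁻¹ := by
        rw [← Real.rpow_mul hP]
        congr 1
        field_simp [hm.ne']

end Blei

section Coefficients

variable {R M : Type*} [CommSemiring R] [AddCommMonoid M] [Module R M]

/-- The coefficient `A (e_{i 1}, …, e_{i m})` of a multilinear map on coordinate spaces. -/
def coeff {ι : Type*} {κ : ι → Type*} [∀ k, DecidableEq (κ k)]
    (A : MultilinearMap R (fun k ↦ κ k → R) M) (i : ∀ k, κ k) : M :=
  A fun k ↦ Pi.single (i k) 1

variable {d : ℕ}

lemma coeff_curryLeft {κ : Fin (d + 1) → Type*} [∀ k, DecidableEq (κ k)]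
    (A : MultilinearMap R (fun k ↦ κ k → R) M) (j : κ 0) (i : ∀ l : Fin d, κ l.succ) :
    coeff (A.curryLeft (Pi.single j 1)) i = coeff A (Fin.cons j i) := by
  refine congrArg A (funext fun l ↦ ?_)
  cases l using Fin.cases <;> rfl

lemma coeff_curryMid {κ : Fin (d + 1) → Type*} [∀ k, DecidableEq (κ k)]
    (A : MultilinearMap R (fun k ↦ κ k → R) M) (k : Fin (d + 1)) (j : κ k)
    (i : ∀ l, κ (k.succAbove l)) :
    coeff (A.curryMid k (Pi.single j 1)) i = coeff A (k.insertNth j i) := by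
  refine congrArg A (funext fun l ↦ ?_)
  cases l using Fin.succAboveCases k <;> simp

variable {𝕜 E : Type*} [NormedField 𝕜] [SeminormedAddCommGroup E] [NormedSpace 𝕜 E]

lemma norm_apply_le_sum_norm_coeff_mul {ι : Type*} [Fintype ι] [DecidableEq ι] {κ : ι → Type*}
    [∀ k, Fintype (κ k)] [∀ k, DecidableEq (κ k)]
    (A : MultilinearMap 𝕜 (fun k ↦ κ k → 𝕜) E) (z : ∀ k, κ k → 𝕜) :
    ‖A z‖ ≤ (∑ i, ‖coeff A i‖) * ∏ k, ‖z k‖ := by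
  have hz : z = fun k ↦ ∑ j, z k j • Pi.single j 1 := funext fun k ↦ pi_eq_sum_univ' (z k)
  calc ‖A z‖ = ‖∑ i : ∀ k, κ k, (∏ k, z k (i k)) • coeff A i‖ := by
        conv_lhs => rw [hz, A.map_sum]
        simp only [A.map_smul_univ, coeff]
    _ ≤ ∑ i : ∀ k, κ k, (∏ k, ‖z k‖) * ‖coeff A i‖ := by
        refine norm_sum_le_of_le _ fun i _ ↦ ?_
        rw [norm_smul, norm_prod]
        gcongr with k
        exact norm_le_pi_norm (z k) (i k)
    _ = (∑ i, ‖coeff A i‖) * ∏ k, ‖z k‖ := by rw [← mul_sum, mul_comm]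

/-- The coefficients of `A (x, ·)`, as a linear map of `x` into an `ℓ²` space. -/
def tailCoeff {κ : Fin (d + 1) → Type*} [∀ k, DecidableEq (κ k)]
    (A : MultilinearMap 𝕜 (fun k ↦ κ k → 𝕜) E) :
    (κ 0 → 𝕜) →ₗ[𝕜] PiLp 2 fun _ : (∀ l : Fin d, κ l.succ) ↦ E where
  toFun x := WithLp.toLp 2 (coeff (A.curryLeft x))
  map_add' x y := by ext; simp [coeff]
  map_smul' c x := by ext; simp [coeff]

lemma norm_tailCoeff {κ : Fin (d + 1) → Type*} [∀ k, Fintype (κ k)] [∀ k, DecidableEq (κ k)]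
    (A : MultilinearMap 𝕜 (fun k ↦ κ k → 𝕜) E) (x : κ 0 → 𝕜) :
    ‖tailCoeff A x‖ = √(∑ i, ‖coeff (A.curryLeft x) i‖ ^ 2) :=
  PiLp.norm_eq_of_L2 _

lemma sum_norm_tailCoeff_single_sq {κ : Fin (d + 1) → Type*} [∀ k, Fintype (κ k)]
    [∀ k, DecidableEq (κ k)] (A : MultilinearMap 𝕜 (fun k ↦ κ k → 𝕜) E) :
    ∑ j, ‖tailCoeff A (Pi.single j 1)‖ ^ 2 = ∑ i, ‖coeff A i‖ ^ 2 := by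
  rw [← (Fin.consEquiv κ).sum_comp, Fintype.sum_prod_type]
  refine sum_congr rfl fun j _ ↦ ?_
  rw [norm_tailCoeff, Real.sq_sqrt (by positivity)]
  simp only [coeff_curryLeft]
  rfl

end Coefficients

section MixedNorm

variable {H : Type*} [NormedAddCommGroup H] [InnerProductSpace ℂ H] {J : Type*} [Fintype J]

lemma stdAddChar_three_sq_ne_one : (ZMod.stdAddChar (N := 3)) ^ 2 ≠ 1 := fun h ↦ by
  have h₂ : ZMod.stdAddChar (2 • (1 : ZMod 3)) = ZMod.stdAddChar (0 : ZMod 3) := by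
    rw [AddChar.map_nsmul_eq_pow, ← AddChar.pow_apply, h, AddChar.one_apply,
      AddChar.map_zero_eq_one]
  exact absurd (ZMod.injective_stdAddChar h₂) (by decide)

lemma exists_norm_le_one_sum_sqrt_le {ι : Type*} [Fintype ι] [DecidableEq ι]
    (L : J → (ι → ℂ) →ₗ[ℂ] H) :
    ∃ w : ι → ℂ, ‖w‖ ≤ 1 ∧
      ∑ j, √(∑ k, ‖L j (Pi.single k 1)‖ ^ 2) ≤ √2 * ∑ j, ‖L j w‖ := by
  -- Cube roots of unity suffice: the moment bounds only need `ψ` and `ψ ^ 2` to have mean zero.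
  let ψ : AddChar (ZMod 3) ℂ := ZMod.stdAddChar
  have hsum (w : ι → ZMod 3) (j : J) :
      charSum ψ (fun k ↦ L j (Pi.single k 1)) univ w = L j fun k ↦ ψ (w k) := by
    conv_rhs => rw [pi_eq_sum_univ' fun k ↦ ψ (w k), map_sum]
    simp only [charSum, map_smul]
  have hmean : ∑ j, √(∑ k, ‖L j (Pi.single k 1)‖ ^ 2) ≤
      𝔼 w : ι → ZMod 3, √2 * ∑ j, ‖L j fun k ↦ ψ (w k)‖ := by
    rw [← mul_expect, expect_sum_comm, mul_sum]
    refine sum_le_sum fun j _ ↦ ?_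
    simpa only [hsum] using sqrt_sum_norm_sq_le_expect_norm_charSum (ψ := ψ)
      stdAddChar_three_sq_ne_one fun k ↦ L j (Pi.single k 1)
  obtain ⟨w, -, hw⟩ := exists_le_of_le_expect univ_nonempty hmean
  refine ⟨fun k ↦ ψ (w k), ?_, hw⟩
  exact (pi_norm_le_iff_of_nonneg zero_le_one).mpr fun k ↦ (ψ.norm_apply _).le

theorem exists_norm_le_one_sum_sqrt_coeff_le {d : ℕ} {κ : Fin d → Type*} [∀ k, Fintype (κ k)]
    [∀ k, DecidableEq (κ k)] (A : J → MultilinearMap ℂ (fun k ↦ κ k → ℂ) H) :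
    ∃ w : ∀ k, κ k → ℂ, ‖w‖ ≤ 1 ∧
      ∑ j, √(∑ i, ‖coeff (A j) i‖ ^ 2) ≤ √2 ^ d * ∑ j, ‖A j w‖ := by
  induction d with
  | zero =>
    refine ⟨0, by simp, le_of_eq ?_⟩
    simp [coeff, Subsingleton.elim _ (0 : ∀ k : Fin 0, κ k → ℂ)]
  | succ d ih =>
    obtain ⟨w₀, hw₀, hfirst⟩ := exists_norm_le_one_sum_sqrt_le fun j ↦ tailCoeff (A j)
    obtain ⟨w, hw, htail⟩ := ih fun j ↦ (A j).curryLeft w₀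
    refine ⟨Fin.cons w₀ w, ?_, ?_⟩
    · rw [pi_norm_le_iff_of_nonneg zero_le_one, Fin.forall_fin_succ]
      exact ⟨hw₀, fun l ↦ (norm_le_pi_norm w l).trans hw⟩
    calc ∑ j, √(∑ i, ‖coeff (A j) i‖ ^ 2)
        ≤ √2 * ∑ j, √(∑ i, ‖coeff ((A j).curryLeft w₀) i‖ ^ 2) := by
          simp only [sum_norm_tailCoeff_single_sq] at hfirst
          simpa only [norm_tailCoeff] using hfirst
      _ ≤ √2 * (√2 ^ d * ∑ j, ‖(A j).curryLeft w₀ w‖) := by gcongr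
      _ = √2 ^ (d + 1) * ∑ j, ‖A j (Fin.cons w₀ w)‖ := by
          rw [pow_succ', mul_assoc]
          rfl

lemma sum_norm_apply_single_le_opNorm {𝕜 ι : Type*} [RCLike 𝕜] [Fintype ι] [DecidableEq ι]
    (f : (ι → 𝕜) →L[𝕜] 𝕜) : ∑ j, ‖f (Pi.single j 1)‖ ≤ ‖f‖ := by
  choose v hv hfv using fun j ↦ RCLike.exists_norm_eq_mul_self (f (Pi.single j 1))
  have hf : f v = ((∑ j, ‖f (Pi.single j 1)‖ : ℝ) : 𝕜) := by
    conv_lhs => rw [pi_eq_sum_univ' v, map_sum]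
    simp [hfv]
  calc ∑ j, ‖f (Pi.single j 1)‖ = ‖f v‖ := by
        rw [hf, RCLike.norm_ofReal, abs_of_nonneg (by positivity)]
    _ ≤ ‖f‖ := f.unit_le_opNorm v
        ((pi_norm_le_iff_of_nonneg zero_le_one).mpr fun j ↦ (hv j).le)

variable {d : ℕ} {κ : Fin (d + 1) → Type*} [∀ k, Fintype (κ k)] [∀ k, DecidableEq (κ k)]

lemma sum_norm_curryMid_single_le_opNorm {𝕜 : Type*} [RCLike 𝕜]
    (A : ContinuousMultilinearMap 𝕜 (fun k ↦ κ k → 𝕜) 𝕜) (k : Fin (d + 1))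
    {w : ∀ l, κ (k.succAbove l) → 𝕜} (hw : ‖w‖ ≤ 1) :
    ∑ j, ‖A.curryMid k (Pi.single j 1) w‖ ≤ ‖A‖ := by
  let f : (κ k → 𝕜) →L[𝕜] 𝕜 := (ContinuousMultilinearMap.apply 𝕜 _ 𝕜 w).comp (A.curryMid k)
  refine (sum_norm_apply_single_le_opNorm f).trans <|
    f.opNorm_le_bound (norm_nonneg A) fun x ↦ ?_
  calc ‖A.curryMid k x w‖ ≤ ‖A.curryMid k x‖ := (A.curryMid k x).unit_le_opNorm hw
    _ ≤ ‖A.curryMid k‖ * ‖x‖ := (A.curryMid k).le_opNorm x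
    _ = ‖A‖ * ‖x‖ := by rw [A.norm_curryMid]

lemma sliceNorm_eq_sqrt_sum_insertNth (a : (∀ k, κ k) → ℝ) (k : Fin (d + 1)) (j : κ k) :
    sliceNorm a k j = √(∑ i, a (k.insertNth j i) ^ 2) := by
  rw [sliceNorm, sum_filter, ← (Fin.insertNthEquiv κ k).sum_comp, Fintype.sum_prod_type]
  simp only [Fin.insertNthEquiv_apply, Fin.insertNth_apply_same, sum_ite_irrel, sum_const_zero,
    sum_ite_eq', mem_univ, if_true]
  rfl

theorem sum_sliceNorm_coeff_le (A : ContinuousMultilinearMap ℂ (fun k ↦ κ k → ℂ) ℂ)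
    (k : Fin (d + 1)) :
    ∑ j, sliceNorm (fun i ↦ ‖coeff A.toMultilinearMap i‖) k j ≤ √2 ^ d * ‖A‖ := by
  obtain ⟨w, hw, hmixed⟩ := exists_norm_le_one_sum_sqrt_coeff_le
    fun j : κ k ↦ A.toMultilinearMap.curryMid k (Pi.single j 1)
  calc ∑ j, sliceNorm (fun i ↦ ‖coeff A.toMultilinearMap i‖) k j
      ≤ √2 ^ d * ∑ j, ‖A.curryMid k (Pi.single j 1) w‖ := by
        simp only [sliceNorm_eq_sqrt_sum_insertNth, ← coeff_curryMid]
        exact hmixed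
    _ ≤ √2 ^ d * ‖A‖ := by
        gcongr
        exact sum_norm_curryMid_single_le_opNorm A k hw

end MixedNorm

section Polydisc

lemma opNorm_le_of_forall_norm_lt_one {ι : Type*} [Fintype ι] {E : ι → Type*} {F : Type*}
    [∀ k, NormedAddCommGroup (E k)] [∀ k, NormedSpace ℂ (E k)] [SeminormedAddCommGroup F]
    [NormedSpace ℂ F] (A : ContinuousMultilinearMap ℂ E F) {C : ℝ}
    (hA : ∀ z, ‖z‖ < 1 → ‖A z‖ ≤ C) : ‖A‖ ≤ C := by
  have hC : 0 ≤ C := (norm_nonneg _).trans (hA 0 (by simp))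
  have hclosed (z : ∀ k, E k) (hz : ‖z‖ ≤ 1) : ‖A z‖ ≤ C := by
    refine le_on_closure (s := Metric.ball 0 1) (fun y hy ↦ hA y (mem_ball_zero_iff.mp hy))
      A.cont.norm.continuousOn continuousOn_const ?_
    rwa [closure_ball _ one_ne_zero, mem_closedBall_zero_iff]
  refine A.opNorm_le_bound hC fun z ↦ ?_
  let y : ∀ k, E k := fun k ↦ (‖z k‖ : ℂ)⁻¹ • z k
  have hy : ‖y‖ ≤ 1 := (pi_norm_le_iff_of_nonneg zero_le_one).mpr fun k ↦ by
    simpa [y, norm_smul] using inv_mul_le_one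
  have hz : z = fun k ↦ (‖z k‖ : ℂ) • y k := funext fun k ↦ by
    rcases eq_or_ne (z k) 0 with h | h <;> simp [y, h]
  calc ‖A z‖ = (∏ k, ‖z k‖) * ‖A y‖ := by
        conv_lhs => rw [hz, A.map_smul_univ, norm_smul]
        simp
    _ ≤ C * ∏ k, ‖z k‖ := by
        rw [mul_comm]
        gcongr
        exact hclosed y hy

lemma opNorm_le_sSup_polydisc {ι : Type*} [Fintype ι] {κ : ι → Type*} [∀ k, Fintype (κ k)]
    {F : Type*} [SeminormedAddCommGroup F] [NormedSpace ℂ F]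
    (A : ContinuousMultilinearMap ℂ (fun k ↦ κ k → ℂ) F) :
    ‖A‖ ≤ sSup {x : ℝ | ∃ z : ∀ k, κ k → ℂ, (∀ k j, ‖z k j‖ < 1) ∧ x = ‖A z‖} := by
  have hball (z : ∀ k, κ k → ℂ) : ‖z‖ < 1 ↔ ∀ k j, ‖z k j‖ < 1 := by
    simp only [pi_norm_lt_iff zero_lt_one]
  refine opNorm_le_of_forall_norm_lt_one A fun z hz ↦
    le_csSup ⟨‖A‖, ?_⟩ ⟨z, (hball z).mp hz, rfl⟩
  rintro _ ⟨y, hy, rfl⟩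
  exact A.unit_le_opNorm ((hball y).mpr hy).le

end Polydisc

end BohnenblustHille

open BohnenblustHille in
theorem multilinear_bohnenblust_hille_general {m : ℕ} (hm : 0 < m) {κ : Fin m → Type*}
    [∀ k, Fintype (κ k)] [∀ k, DecidableEq (κ k)]
    (A : ContinuousMultilinearMap ℂ (fun k ↦ κ k → ℂ) ℂ) :
    (∑ i : ∀ k, κ k, ‖A fun k ↦ Pi.single (i k) 1‖ ^ (2 * (m : ℝ) / ((m : ℝ) + 1))) ^
        (((m : ℝ) + 1) / (2 * (m : ℝ))) ≤ √2 ^ (m - 1) * ‖A‖ := by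
  obtain ⟨d, rfl⟩ := Nat.exists_eq_add_one.mpr hm
  let a : (∀ k, κ k) → ℝ := fun i ↦ ‖coeff A.toMultilinearMap i‖
  have hblei := blei_inequality (a := a) fun _ ↦ norm_nonneg _
  rw [Fintype.card_fin] at hblei
  calc _ ≤ (∏ k, ∑ j, sliceNorm a k j) ^ ((d + 1 : ℕ) : ℝ)⁻¹ := hblei
    _ ≤ ((√2 ^ d * ‖A‖) ^ (d + 1)) ^ ((d + 1 : ℕ) : ℝ)⁻¹ := by
        have hnonneg (k) : 0 ≤ ∑ j, sliceNorm a k j := sum_nonneg fun j _ ↦ sliceNorm_nonneg a k j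
        gcongr
        · exact prod_nonneg fun k _ ↦ hnonneg k
        · exact (prod_le_prod (fun k _ ↦ hnonneg k) fun k _ ↦ sum_sliceNorm_coeff_le A k).trans_eq
            (by simp)
    _ = √2 ^ d * ‖A‖ := Real.pow_rpow_inv_natCast (by positivity) (by omega)

/-- Multilinear Bohnenblust–Hille inequality with the Davie–Kaijser constant `√2^(m-1)`. -/
theorem multilinear_bohnenblust_hille (m n : ℕ) (hm : 0 < m) (hn : 0 < n)
    (A : MultilinearMap ℂ (fun _ : Fin m => (Fin n → ℂ)) ℂ) :
    (∑ i : Fin m → Fin n,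
        ‖A (fun k => Pi.single (i k) 1)‖ ^ ((2 * (m : ℝ)) / ((m : ℝ) + 1)))
          ^ (((m : ℝ) + 1) / (2 * (m : ℝ)))
      ≤ Real.sqrt 2 ^ (m - 1) *
        sSup {x : ℝ | ∃ z : Fin m → Fin n → ℂ,
          (∀ k j, ‖z k j‖ < 1) ∧ x = ‖A z‖} := by
  let A' := A.mkContinuous _ (BohnenblustHille.norm_apply_le_sum_norm_coeff_mul A)
  exact (multilinear_bohnenblust_hille_general hm A').trans <|
    mul_le_mul_of_nonneg_left (BohnenblustHille.opNorm_le_sSup_polydisc A') (by positivity)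
end

section
/- For all positive integers m, n the following holds: whenever P₁, …, P_N are m-homogeneous polynomials on ℂ^n, P_t(z) = ∑_{|α|=m} a_α^{(t)} z^α, such that sup_{z ∈ 𝔻^n} |∑_{t=1}^N λ_t P_t(z)| ≤ 1 for every choice of complex scalars λ₁,…,λ_N with |λ_t| ≤ 1, then ∑_{t=1}^N (∑_{|α|=m} |a_α^{(t)}|²)^{1/2} ≤ (√2)^m. Equivalently, the 1-summing norm of the coefficient map T : 𝒫(^m ℓ_∞^n) → ℓ₂, ∑_{|α|=m} a_α z^α ↦ (a_α)_{|α|=m}, is at most (√2)^m. -/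
open Finset

/-- Evaluation of the `m`-homogeneous polynomial on `ℂ^n` with coefficient family `a`
(indexed by the multi-indices `α` with `|α| = m`) at the point `z`. -/
noncomputable def mhEval (n m : ℕ) (a : (Fin n → ℕ) → ℂ) (z : Fin n → ℂ) : ℂ :=
  ∑ α ∈ Finset.Nat.antidiagonalTuple n m, a α * ∏ i, z i ^ α i

/-!
Carleman's inequality `∑ |pₖ|² / (k + 1) ≤ (⨍ |p|)²` for a polynomial `p` in one variable comes from
writing `p = g h` on the closed unit disc with `|g| = |h| = |p|^{1/2}` on the circle: dividing `p`
by a Blaschke product leaves a function with an analytic square root. Cauchy–Schwarz on the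
convolution of the Taylor coefficients and Bessel's inequality for `g` and `h` then give the bound.
Since `k + 1 ≤ 2 ^ k`, it implies `(∑ |aₖ|²)^{1/2} ≤ ⨍ |∑ aₖ (√2 z)^k|`.

This `ℓ₂`–`L¹` estimate tensorizes by Minkowski's inequality, so the `ℓ₂` norm of the coefficients
of a polynomial `P` in `n` variables is at most the mean of `|P (√2 z)|` over the torus. If `P` is
`m`-homogeneous then `P (√2 z) = √2 ^ m P z`, and the hypothesis says that `∑ |P_t| ≤ 1` pointwise.
-/

section Carleman

open MeasureTheory Metric Real Polynomial
open scoped ComplexConjugate Nat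

/-- The `k`-th Taylor coefficient at `0` of a function of one complex variable. -/
noncomputable def taylorCoeff (f : ℂ → ℂ) (k : ℕ) : ℂ :=
  iteratedDeriv k f 0 / k !

lemma taylorCoeff_mul {f g : ℂ → ℂ} (hf : AnalyticAt ℂ f 0) (hg : AnalyticAt ℂ g 0) (k : ℕ) :
    taylorCoeff (fun z ↦ f z * g z) k =
      ∑ ij ∈ antidiagonal k, taylorCoeff f ij.1 * taylorCoeff g ij.2 := by
  rw [Nat.sum_antidiagonal_eq_sum_range_succ fun i j ↦ taylorCoeff f i * taylorCoeff g j,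
    taylorCoeff, iteratedDeriv_fun_mul hf.contDiffAt hg.contDiffAt, sum_div]
  refine sum_congr rfl fun i hi ↦ ?_
  have hk : (k ! : ℂ) ≠ 0 := mod_cast k.factorial_ne_zero
  rw [Nat.cast_choose ℂ (mem_range_succ_iff.mp hi), taylorCoeff, taylorCoeff]
  field_simp

lemma taylorCoeff_eval (p : ℂ[X]) (k : ℕ) : taylorCoeff (fun z ↦ p.eval z) k = p.coeff k := by
  have hk : (k ! : ℂ) ≠ 0 := mod_cast k.factorial_ne_zero
  simp only [taylorCoeff, p.eval_eq_sum_range]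
  rw [iteratedDeriv_fun_sum fun i _ ↦ by fun_prop]
  simp only [iteratedDeriv_const_mul_field, iteratedDeriv_fun_pow_zero]
  rw [div_eq_iff hk, sum_eq_single k (fun i _ hik ↦ by simp [hik.symm]) fun hk ↦ ?_]
  · simp
  · rw [p.coeff_eq_zero_of_natDegree_lt (by simpa using hk), zero_mul]

/-- The period is left as `2 * π - 0` because `fourierCoeffOn` on `[0, 2π]` produces it so. -/
lemma fourier_neg_eq_inv_circleMap_pow (k : ℕ) (θ : ℝ) :
    fourier (-k) (θ : AddCircle (2 * π - 0)) = (circleMap 0 1 θ ^ k)⁻¹ := by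
  rw [fourier_coe_apply, circleMap_zero, Complex.ofReal_one, one_mul, ← Complex.exp_nat_mul,
    ← Complex.exp_neg]
  congr 1
  push_cast
  field_simp
  ring

lemma fourierCoeffOn_comp_circleMap {f : ℂ → ℂ} (hf : DiffContOnCl ℂ f (ball 0 1)) (k : ℕ) :
    fourierCoeffOn two_pi_pos (fun θ ↦ f (circleMap 0 1 θ)) k = taylorCoeff f k := by
  have cauchy := hf.circleIntegral_one_div_sub_center_pow_smul one_pos k
  have integrand (θ : ℝ) : deriv (circleMap 0 1) θ • (1 / (circleMap 0 1 θ - 0) ^ (k + 1)) •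
      f (circleMap 0 1 θ) = Complex.I *
        (fourier (-k) (θ : AddCircle (2 * π - 0)) • f (circleMap 0 1 θ)) := by
    have : circleMap 0 1 θ ≠ 0 := circleMap_ne_center one_ne_zero
    simp only [deriv_circleMap, smul_eq_mul, fourier_neg_eq_inv_circleMap_pow, sub_zero]
    field_simp
    ring
  have hpi : (π : ℂ) ≠ 0 := mod_cast pi_ne_zero
  have hk : (k ! : ℂ) ≠ 0 := mod_cast k.factorial_ne_zero
  rw [circleIntegral, funext integrand, intervalIntegral.integral_const_mul, smul_eq_mul] at cauchy
  apply mul_left_cancel₀ Complex.I_ne_zero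
  rw [fourierCoeffOn_eq_integral, taylorCoeff, mul_smul_comm, cauchy, Complex.real_smul]
  push_cast
  field_simp
  ring

lemma sum_sq_norm_taylorCoeff_le {f : ℂ → ℂ} (hf : DiffContOnCl ℂ f (ball 0 1)) (s : Finset ℕ) :
    ∑ k ∈ s, ‖taylorCoeff f k‖ ^ 2 ≤ circleAverage (fun z ↦ ‖f z‖ ^ 2) 0 1 := by
  have hcont : Continuous fun θ : ℝ ↦ f (circleMap 0 1 θ) :=
    hf.continuousOn_ball.comp_continuous (continuous_circleMap 0 1)
      fun θ ↦ circleMap_mem_closedBall 0 zero_le_one θ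
  have parseval := hasSum_sq_fourierCoeffOn two_pi_pos
    ((memLp_two_iff_integrable_sq_norm hcont.aestronglyMeasurable).mpr
      (hcont.norm.pow 2).integrableOn_Ioc)
  have := sum_le_hasSum (s.map Nat.castEmbedding) (fun _ _ ↦ by positivity) parseval
  simpa [fourierCoeffOn_comp_circleMap hf, circleAverage_def] using this

/-- A factorization `f = g * h` on the closed unit disc into functions of the disc algebra whose
moduli agree on the unit circle, so that `|f| = |g|² = |h|²` there. -/
def HasBalancedFactorization (f : ℂ → ℂ) : Prop :=
  ∃ g h : ℂ → ℂ, DiffContOnCl ℂ g (ball 0 1) ∧ DiffContOnCl ℂ h (ball 0 1) ∧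
    (∀ z ∈ closedBall 0 1, f z = g z * h z) ∧ ∀ z ∈ sphere 0 1, ‖g z‖ = ‖h z‖

namespace HasBalancedFactorization

lemma mul {f₁ f₂ : ℂ → ℂ} (hf₁ : HasBalancedFactorization f₁)
    (hf₂ : HasBalancedFactorization f₂) : HasBalancedFactorization fun z ↦ f₁ z * f₂ z := by
  obtain ⟨g₁, h₁, hg₁, hh₁, hfac₁, hnorm₁⟩ := hf₁
  obtain ⟨g₂, h₂, hg₂, hh₂, hfac₂, hnorm₂⟩ := hf₂
  refine ⟨fun z ↦ g₁ z * g₂ z, fun z ↦ h₁ z * h₂ z, hg₁.smul hg₂, hh₁.smul hh₂,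
    fun z hz ↦ ?_, fun z hz ↦ ?_⟩
  · simp only [hfac₁ z hz, hfac₂ z hz, mul_mul_mul_comm]
  · simp only [norm_mul, hnorm₁ z hz, hnorm₂ z hz]

lemma of_sq {f h : ℂ → ℂ} (hh : DiffContOnCl ℂ h (ball 0 1))
    (hf : ∀ z ∈ closedBall 0 1, h z ^ 2 = f z) : HasBalancedFactorization f :=
  ⟨h, h, hh, hh, fun z hz ↦ by rw [← hf z hz, sq], fun _ _ ↦ rfl⟩

lemma const (c : ℂ) : HasBalancedFactorization fun _ ↦ c := by
  obtain ⟨s, hs⟩ := IsAlgClosed.exists_pow_nat_eq c two_pos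
  exact of_sq (h := fun _ ↦ s) diffContOnCl_const fun _ _ ↦ hs

end HasBalancedFactorization

lemma exists_diffContOnCl_sq_eq_one_sub_mul {u : ℂ} (hu : ‖u‖ ≤ 1) :
    ∃ h : ℂ → ℂ, DiffContOnCl ℂ h (ball 0 1) ∧ ∀ z, h z ^ 2 = 1 - u * z := by
  refine ⟨fun z ↦ (1 - u * z) ^ ((2 : ℕ) : ℂ)⁻¹, ⟨fun z hz ↦ ?_, fun z hz ↦ ?_⟩,
    fun z ↦ Complex.cpow_nat_inv_pow _ two_ne_zero⟩
  · have huz : ‖-(u * z)‖ < 1 := by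
      rw [norm_neg, norm_mul]
      exact mul_lt_one_of_nonneg_of_lt_one_right hu (norm_nonneg z) (mem_ball_zero_iff.mp hz)
    have hslit : 1 - u * z ∈ Complex.slitPlane := by
      simpa only [sub_eq_add_neg] using Complex.mem_slitPlane_of_norm_lt_one huz
    have hdiff : DifferentiableAt ℂ (fun z ↦ 1 - u * z) z := by fun_prop
    exact (hdiff.cpow_const hslit).differentiableWithinAt
  · have hz : ‖z‖ ≤ 1 := by simpa [closure_ball] using hz
    have hre : 0 ≤ (1 - u * z).re := by
      have := (Complex.re_le_norm (u * z)).trans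
        ((norm_mul u z).trans_le (mul_le_one₀ hu (norm_nonneg z) hz))
      simpa using this
    have hcpow := Complex.continuousAt_cpow_const_of_re_pos (w := ((2 : ℕ) : ℂ)⁻¹) (Or.inl hre)
      (by norm_num)
    exact (hcpow.comp (f := fun z ↦ 1 - u * z) (by fun_prop)).continuousWithinAt

lemma norm_one_sub_conj_mul {z : ℂ} (w : ℂ) (hz : ‖z‖ = 1) :
    ‖1 - conj w * z‖ = ‖z - w‖ := by
  have : 1 - conj w * z = z * conj (z - w) := by
    rw [map_sub, mul_sub, Complex.mul_conj', hz]
    push_cast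
    ring
  rw [this, norm_mul, hz, Complex.norm_conj, one_mul]

namespace HasBalancedFactorization

/-- For `‖w‖ < 1`, the Blaschke factor at `w` is split off `z - w`, leaving `1 - conj w * z`, which
has an analytic square root `h`; it is then put together with one of the two copies of `h`. -/
lemma sub_const (w : ℂ) : HasBalancedFactorization fun z ↦ z - w := by
  rcases lt_or_ge ‖w‖ 1 with hw | hw
  · obtain ⟨h, hh, hsq⟩ := exists_diffContOnCl_sq_eq_one_sub_mul (u := conj w)
      (by simpa using hw.le)
    have hne : ∀ z ∈ closedBall 0 1, h z ≠ 0 := by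
      intro z hz h0
      have hone : ‖conj w * z‖ = 1 := by
        rw [← sub_eq_zero.mp ((hsq z).symm.trans (by rw [h0, zero_pow two_ne_zero])), norm_one]
      rw [norm_mul, Complex.norm_conj] at hone
      exact (mul_lt_one_of_nonneg_of_lt_one_left (norm_nonneg w) hw
        (mem_closedBall_zero_iff.mp hz)).ne hone
    refine ⟨fun z ↦ (h z)⁻¹ * (z - w), h, ?_, hh, fun z hz ↦ ?_, fun z hz ↦ ?_⟩
    · exact (hh.inv (by simpa [closure_ball] using hne)).smul
        (Differentiable.diffContOnCl (by fun_prop))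
    · have := hne z hz
      field_simp
    · have hhz : ‖h z‖ ≠ 0 := norm_ne_zero_iff.mpr (hne z (sphere_subset_closedBall hz))
      rw [norm_mul, norm_inv, ← norm_one_sub_conj_mul w (mem_sphere_zero_iff_norm.mp hz), ← hsq,
        norm_pow]
      field_simp
  · obtain ⟨h, hh, hsq⟩ := exists_diffContOnCl_sq_eq_one_sub_mul (u := w⁻¹)
      (by rw [norm_inv]; exact inv_le_one_of_one_le₀ hw)
    have hw0 : w ≠ 0 := norm_pos_iff.mp (one_pos.trans_le hw)
    convert (const (-w)).mul (of_sq hh fun z _ ↦ hsq z) using 2 with z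
    field_simp
    ring

lemma eval (p : ℂ[X]) : HasBalancedFactorization fun z ↦ p.eval z := by
  have hroots (s : Multiset ℂ) : HasBalancedFactorization fun z ↦ (s.map (z - ·)).prod := by
    induction s using Multiset.induction_on with
    | empty => simpa using const 1
    | cons w s ih => simpa using (sub_const w).mul ih
  simpa only [(IsAlgClosed.splits p).eval_eq_prod_roots] using
    (const p.leadingCoeff).mul (hroots p.roots)

end HasBalancedFactorization

lemma sum_range_sum_antidiagonal_le {M : Type*} [AddCommMonoid M] [PartialOrder M]
    [IsOrderedAddMonoid M] {f : ℕ × ℕ → M} (hf : ∀ ij, 0 ≤ f ij) (d : ℕ) :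
    ∑ k ∈ range d, ∑ ij ∈ antidiagonal k, f ij ≤ ∑ ij ∈ range d ×ˢ range d, f ij := by
  have hdisj : (range d : Set ℕ).PairwiseDisjoint fun k ↦ antidiagonal k := fun k _ l _ hkl ↦
    disjoint_left.mpr fun ij hk hl ↦ hkl (by
      rw [← HasAntidiagonal.mem_antidiagonal.mp hk, HasAntidiagonal.mem_antidiagonal.mp hl])
  rw [← sum_biUnion hdisj]
  refine sum_le_sum_of_subset_of_nonneg (fun ij hij ↦ ?_) fun ij _ _ ↦ hf ij
  simp only [mem_biUnion, mem_range, HasAntidiagonal.mem_antidiagonal, mem_product] at hij ⊢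
  lia

lemma sum_sq_norm_convolution_div_le (b c : ℕ → ℂ) (d : ℕ) :
    ∑ k ∈ range d, ‖∑ ij ∈ antidiagonal k, b ij.1 * c ij.2‖ ^ 2 / (k + 1) ≤
      (∑ k ∈ range d, ‖b k‖ ^ 2) * ∑ k ∈ range d, ‖c k‖ ^ 2 := by
  calc
    _ ≤ ∑ k ∈ range d, ∑ ij ∈ antidiagonal k, ‖b ij.1‖ ^ 2 * ‖c ij.2‖ ^ 2 := by
      refine sum_le_sum fun k _ ↦ (div_le_iff₀' (by positivity)).mpr ?_
      calc
        ‖∑ ij ∈ antidiagonal k, b ij.1 * c ij.2‖ ^ 2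
          ≤ (∑ ij ∈ antidiagonal k, ‖b ij.1 * c ij.2‖) ^ 2 := by
            gcongr
            exact norm_sum_le _ _
        _ ≤ #(antidiagonal k) * ∑ ij ∈ antidiagonal k, ‖b ij.1 * c ij.2‖ ^ 2 :=
            sq_sum_le_card_mul_sum_sq
        _ = (k + 1) * ∑ ij ∈ antidiagonal k, ‖b ij.1‖ ^ 2 * ‖c ij.2‖ ^ 2 := by
            simp [mul_pow]
    _ ≤ _ := by
      rw [sum_mul_sum, ← sum_product']
      exact sum_range_sum_antidiagonal_le (fun _ ↦ by positivity) d

lemma HasBalancedFactorization.sum_sq_norm_taylorCoeff_div_le {f : ℂ → ℂ}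
    (hf : HasBalancedFactorization f) (d : ℕ) :
    ∑ k ∈ range d, ‖taylorCoeff f k‖ ^ 2 / (k + 1) ≤ circleAverage (fun z ↦ ‖f z‖) 0 1 ^ 2 := by
  obtain ⟨g, h, hg, hh, hfac, hnorm⟩ := hf
  have hsq : ∀ z ∈ sphere 0 |1|, ‖f z‖ = ‖g z‖ ^ 2 ∧ ‖f z‖ = ‖h z‖ ^ 2 := fun z hz ↦ by
    rw [abs_one] at hz
    rw [hfac z (sphere_subset_closedBall hz), norm_mul, hnorm z hz, sq, and_self]
  have hg_avg : circleAverage (fun z ↦ ‖f z‖) 0 1 = circleAverage (fun z ↦ ‖g z‖ ^ 2) 0 1 :=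
    circleAverage_congr_sphere fun z hz ↦ (hsq z hz).1
  have hh_avg : circleAverage (fun z ↦ ‖f z‖) 0 1 = circleAverage (fun z ↦ ‖h z‖ ^ 2) 0 1 :=
    circleAverage_congr_sphere fun z hz ↦ (hsq z hz).2
  have hball : ball (0 : ℂ) 1 ∈ nhds 0 := ball_mem_nhds 0 one_pos
  have hconv (k : ℕ) : taylorCoeff f k =
      ∑ ij ∈ antidiagonal k, taylorCoeff g ij.1 * taylorCoeff h ij.2 := by
    have hgerm : f =ᶠ[nhds 0] fun z ↦ g z * h z := by
      filter_upwards [hball] with z hz using hfac z (ball_subset_closedBall hz)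
    rw [← taylorCoeff_mul (hg.differentiableOn.analyticAt hball)
      (hh.differentiableOn.analyticAt hball), taylorCoeff, taylorCoeff, hgerm.iteratedDeriv_eq]
  calc
    ∑ k ∈ range d, ‖taylorCoeff f k‖ ^ 2 / (k + 1)
      ≤ (∑ k ∈ range d, ‖taylorCoeff g k‖ ^ 2) * ∑ k ∈ range d, ‖taylorCoeff h k‖ ^ 2 := by
        simpa only [hconv] using sum_sq_norm_convolution_div_le _ _ d
    _ ≤ circleAverage (fun z ↦ ‖g z‖ ^ 2) 0 1 * circleAverage (fun z ↦ ‖h z‖ ^ 2) 0 1 := by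
        gcongr
        · exact circleAverage_nonneg_of_nonneg fun _ _ ↦ by positivity
        · exact sum_sq_norm_taylorCoeff_le hg _
        · exact sum_sq_norm_taylorCoeff_le hh _
    _ = circleAverage (fun z ↦ ‖f z‖) 0 1 ^ 2 := by rw [← hg_avg, ← hh_avg, sq]

theorem carleman_inequality (p : ℂ[X]) (d : ℕ) :
    ∑ k ∈ range d, ‖p.coeff k‖ ^ 2 / (k + 1) ≤ circleAverage (fun z ↦ ‖p.eval z‖) 0 1 ^ 2 := by
  simpa only [taylorCoeff_eval] using
    (HasBalancedFactorization.eval p).sum_sq_norm_taylorCoeff_div_le d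

theorem sqrt_sum_sq_norm_le_circleAverage (s : Finset ℕ) (a : ℕ → ℂ) :
    √(∑ k ∈ s, ‖a k‖ ^ 2) ≤
      circleAverage (fun z ↦ ‖∑ k ∈ s, a k * ((√2 : ℂ) * z) ^ k‖) 0 1 := by
  let p : ℂ[X] := ∑ k ∈ s, monomial k (a k * (√2 : ℂ) ^ k)
  obtain ⟨d, hd⟩ := s.exists_nat_subset_range
  have heval (z : ℂ) : p.eval z = ∑ k ∈ s, a k * ((√2 : ℂ) * z) ^ k := by
    simp [p, eval_finsetSum, mul_pow, mul_assoc]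
  have hcoeff {k : ℕ} (hk : k ∈ s) : ‖p.coeff k‖ ^ 2 = ‖a k‖ ^ 2 * 2 ^ k := by
    simp [p, coeff_monomial, hk, mul_pow, ← pow_mul, mul_comm k 2, pow_mul _ 2]
  have hle {k : ℕ} (hk : k ∈ s) : ‖a k‖ ^ 2 ≤ ‖p.coeff k‖ ^ 2 / (k + 1) := by
    rw [hcoeff hk, le_div_iff₀ (by positivity)]
    gcongr
    exact_mod_cast k.lt_two_pow_self
  refine Real.sqrt_le_iff.mpr ⟨circleAverage_nonneg_of_nonneg fun _ _ ↦ norm_nonneg _, ?_⟩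
  calc
    ∑ k ∈ s, ‖a k‖ ^ 2 ≤ ∑ k ∈ s, ‖p.coeff k‖ ^ 2 / (k + 1) := sum_le_sum fun _ ↦ hle
    _ ≤ ∑ k ∈ range d, ‖p.coeff k‖ ^ 2 / (k + 1) :=
      sum_le_sum_of_subset_of_nonneg hd fun _ _ _ ↦ by positivity
    _ ≤ _ := by simpa only [heval] using carleman_inequality p d

end Carleman

section LowerTwoEstimate

open MeasureTheory

lemma sqrt_sum_sq_integral_le_integral_sqrt {X ι : Type*} [MeasurableSpace X] {μ : Measure X}
    (s : Finset ι) {f : ι → X → ℝ} (hf : ∀ i ∈ s, Integrable (f i) μ) :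
    √(∑ i ∈ s, (∫ x, f i x ∂μ) ^ 2) ≤ ∫ x, √(∑ i ∈ s, f i x ^ 2) ∂μ := by
  let F (x : X) : EuclideanSpace ℝ s := WithLp.toLp 2 fun i ↦ f i x
  have hF (i : s) : Integrable (fun x ↦ (F x).ofLp i) μ := hf i i.2
  have minkowski := norm_integral_le_integral_norm (μ := μ) F
  simp only [EuclideanSpace.norm_eq, eval_integral_piLp hF, F, Real.norm_eq_abs, sq_abs]
    at minkowski
  have hsum (x : X) := sum_coe_sort s fun i ↦ f i x ^ 2
  simpa only [sum_coe_sort s fun i ↦ (∫ x, f i x ∂μ) ^ 2, hsum] using minkowski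

variable {X Y ι κ : Type*} [MeasurableSpace X] [MeasurableSpace Y]

/-- The system `φ` of functions satisfies the lower estimate `‖a‖_{ℓ₂} ≤ ‖∑ aᵢ φᵢ‖_{L¹(μ)}` for all
finitely supported coefficient families `a`; this is the inequality that is tensorized here. -/
def HasLowerTwoEstimate (μ : Measure X) (φ : ι → X → ℂ) : Prop :=
  ∀ (s : Finset ι) (a : ι → ℂ), √(∑ i ∈ s, ‖a i‖ ^ 2) ≤ ∫ x, ‖∑ i ∈ s, a i * φ i x‖ ∂μ

namespace HasLowerTwoEstimate

variable {μ : Measure X} {ν : Measure Y} {φ : ι → X → ℂ} {ψ : κ → Y → ℂ}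

lemma comp_equiv (hφ : HasLowerTwoEstimate μ φ) (e : κ ≃ ι) {f : Y ≃ᵐ X}
    (hf : MeasurePreserving f ν μ) : HasLowerTwoEstimate ν fun k y ↦ φ (e k) (f y) := by
  intro s a
  rw [hf.integral_comp' (g := fun x ↦ ‖∑ k ∈ s, a k * φ (e k) x‖)]
  simpa using hφ (s.map e.toEmbedding) (a ∘ e.symm)

lemma prod [SFinite μ] [SFinite ν] (hφ : HasLowerTwoEstimate μ φ) (hψ : HasLowerTwoEstimate ν ψ)
    (hφ_int : ∀ i, Integrable (φ i) μ) (hψ_int : ∀ k, Integrable (ψ k) ν) :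
    HasLowerTwoEstimate (μ.prod ν) fun (p : ι × κ) z ↦ φ p.1 z.1 * ψ p.2 z.2 := by
  classical
  intro s a
  let K := s.image Prod.snd
  let I (k : κ) := {p ∈ s | p.2 = k}.image Prod.fst
  have hs : ∀ p, p ∈ s ↔ p.2 ∈ K ∧ p.1 ∈ I p.2 := by
    simp [K, I]
    grind
  let G (x : X) (k : κ) : ℂ := ∑ i ∈ I k, a (i, k) * φ i x
  have hsum (x : X) (y : Y) :
      ∑ p ∈ s, a p * (φ p.1 x * ψ p.2 y) = ∑ k ∈ K, G x k * ψ k y := by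
    simp only [sum_finset_product_right s K I hs, G, sum_mul, mul_assoc]
  have hG (k : κ) : Integrable (fun x ↦ ‖G x k‖) μ :=
    (integrable_finsetSum _ fun i _ ↦ (hφ_int i).const_mul _).norm
  have hint : Integrable (fun z : X × Y ↦ ‖∑ p ∈ s, a p * (φ p.1 z.1 * ψ p.2 z.2)‖) (μ.prod ν) :=
    (integrable_finsetSum _ fun p _ ↦ ((hφ_int p.1).mul_prod (hψ_int p.2)).const_mul _).norm
  calc
    √(∑ p ∈ s, ‖a p‖ ^ 2) ≤ √(∑ k ∈ K, (∫ x, ‖G x k‖ ∂μ) ^ 2) := by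
      rw [sum_finset_product_right s K I hs]
      gcongr with k
      exact (Real.sqrt_le_iff.mp (hφ (I k) fun i ↦ a (i, k))).2
    _ ≤ ∫ x, √(∑ k ∈ K, ‖G x k‖ ^ 2) ∂μ := sqrt_sum_sq_integral_le_integral_sqrt K fun k _ ↦ hG k
    _ ≤ ∫ x, ∫ y, ‖∑ p ∈ s, a p * (φ p.1 x * ψ p.2 y)‖ ∂ν ∂μ := by
      refine integral_mono_of_nonneg (.of_forall fun _ ↦ by positivity) hint.integral_prod_left
        (.of_forall fun x ↦ ?_)
      simpa only [hsum] using hψ K (G x)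
    _ = _ := (integral_prod _ hint).symm

lemma pi [IsProbabilityMeasure μ] (hφ : HasLowerTwoEstimate μ φ)
    (hφ_int : ∀ i, Integrable (φ i) μ) (n : ℕ) :
    HasLowerTwoEstimate (Measure.pi fun _ : Fin n ↦ μ)
      fun (α : Fin n → ι) x ↦ ∏ i, φ (α i) (x i) := by
  induction n with
  | zero =>
    intro s a
    rcases s.eq_empty_or_nonempty with rfl | hs
    · simp
    · simp [hs.eq_univ]
  | succ n ih =>
    have hprod := hφ.prod ih hφ_int
      fun (α : Fin n → ι) ↦ Integrable.fintype_prod fun i ↦ hφ_int (α i)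
    simpa [Fin.prod_univ_succ, Fin.tail] using hprod.comp_equiv (Fin.consEquiv fun _ ↦ ι).symm
      (measurePreserving_piFinSuccAbove (fun _ : Fin (n + 1) ↦ μ) 0)

lemma sum_sqrt_le [IsProbabilityMeasure μ] (hφ : HasLowerTwoEstimate μ φ)
    (hφ_int : ∀ i, Integrable (φ i) μ) {τ : Type*} [Fintype τ] (s : Finset ι) (a : τ → ι → ℂ)
    {C : ℝ} (hC : ∀ x, ∑ t, ‖∑ i ∈ s, a t i * φ i x‖ ≤ C) :
    ∑ t, √(∑ i ∈ s, ‖a t i‖ ^ 2) ≤ C := by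
  have hint (t : τ) : Integrable (fun x ↦ ‖∑ i ∈ s, a t i * φ i x‖) μ :=
    (integrable_finsetSum _ fun i _ ↦ (hφ_int i).const_mul _).norm
  calc
    ∑ t, √(∑ i ∈ s, ‖a t i‖ ^ 2) ≤ ∑ t, ∫ x, ‖∑ i ∈ s, a t i * φ i x‖ ∂μ :=
      sum_le_sum fun t _ ↦ hφ s (a t)
    _ = ∫ x, ∑ t, ‖∑ i ∈ s, a t i * φ i x‖ ∂μ := (integral_finsetSum _ fun t _ ↦ hint t).symm
    _ ≤ ∫ _, C ∂μ := integral_mono (integrable_finsetSum _ fun t _ ↦ hint t)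
      (integrable_const C) hC
    _ = C := by simp

end HasLowerTwoEstimate

end LowerTwoEstimate

section Torus

open MeasureTheory
open scoped Real

lemma circleAverage_eq_integral_toCircle (f : ℂ → ℝ) :
    Real.circleAverage f 0 1 = ∫ x : UnitAddCircle, f x.toCircle ∂AddCircle.haarAddCircle := by
  have hcircle (θ : ℝ) : circleMap 0 1 (2 * π * θ) = AddCircle.toCircle (θ : UnitAddCircle) := by
    rw [AddCircle.toCircle_apply_mk, Circle.coe_exp, circleMap_zero]
    simp
  rw [AddCircle.integral_haarAddCircle, ← AddCircle.intervalIntegral_preimage 1 0,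
    Real.circleAverage_def]
  simp only [← hcircle]
  rw [intervalIntegral.integral_comp_mul_left (fun θ ↦ f (circleMap 0 1 θ))
    Real.two_pi_pos.ne']
  simp

lemma hasLowerTwoEstimate_toCircle :
    HasLowerTwoEstimate AddCircle.haarAddCircle
      fun (k : ℕ) (x : UnitAddCircle) ↦ ((√2 : ℂ) * x.toCircle) ^ k := fun s a ↦
  (sqrt_sum_sq_norm_le_circleAverage s a).trans_eq (circleAverage_eq_integral_toCircle _)

lemma integrable_const_mul_toCircle_pow (c : ℂ) (k : ℕ) :
    Integrable (fun x : UnitAddCircle ↦ (c * x.toCircle) ^ k) AddCircle.haarAddCircle := by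
  have : Continuous fun x : UnitAddCircle ↦ (c * x.toCircle) ^ k := by fun_prop
  exact this.integrable_of_hasCompactSupport (.of_compactSpace _)

end Torus

lemma mhEval_const_mul (n m : ℕ) (a : (Fin n → ℕ) → ℂ) (c : ℂ) (z : Fin n → ℂ) :
    mhEval n m a (fun i ↦ c * z i) = c ^ m * mhEval n m a z := by
  rw [mhEval, mhEval, mul_sum]
  refine sum_congr rfl fun α hα ↦ ?_
  simp only [mul_pow, prod_mul_distrib, prod_pow_eq_pow_sum, Nat.mem_antidiagonalTuple.mp hα]
  ring

lemma continuous_mhEval (n m : ℕ) (a : (Fin n → ℕ) → ℂ) : Continuous (mhEval n m a) := by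
  unfold mhEval
  fun_prop

lemma sum_norm_le_of_forall_norm_sum_mul_le {τ : Type*} [Fintype τ] {c : τ → ℂ} {C : ℝ}
    (h : ∀ lam : τ → ℂ, (∀ t, ‖lam t‖ ≤ 1) → ‖∑ t, lam t * c t‖ ≤ C) : ∑ t, ‖c t‖ ≤ C := by
  have hmul (t : τ) : starRingEnd ℂ (c t) / ‖c t‖ * c t = ‖c t‖ := by
    rw [div_mul_eq_mul_div, Complex.conj_mul', sq, mul_self_div_self]
  have := h (fun t ↦ starRingEnd ℂ (c t) / ‖c t‖) fun t ↦ by simpa using div_self_le_one ‖c t‖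
  simp only [hmul, ← Complex.ofReal_sum, Complex.norm_real] at this
  exact (le_abs_self _).trans this

lemma le_on_closedPolydisc_of_le_on_polydisc {ι : Type*} [Finite ι] {f : (ι → ℂ) → ℝ} {C : ℝ}
    (hf : Continuous f) (h : ∀ z : ι → ℂ, (∀ i, ‖z i‖ < 1) → f z ≤ C) (z : ι → ℂ)
    (hz : ∀ i, ‖z i‖ ≤ 1) : f z ≤ C := by
  cases nonempty_fintype ι
  have hball : Metric.ball (0 : ι → ℂ) 1 ⊆ {z | f z ≤ C} := fun z hz ↦
    h z ((pi_norm_lt_iff one_pos).mp (mem_ball_zero_iff.mp hz))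
  have hclosed := closure_minimal hball (isClosed_le hf continuous_const)
  rw [closure_ball _ one_ne_zero] at hclosed
  exact hclosed (mem_closedBall_zero_iff.mpr ((pi_norm_le_iff_of_nonneg zero_le_one).mpr hz))

/-- The 1-summing norm of the coefficient map `T : 𝒫(^m ℓ_∞^n) → ℓ₂`,
`∑ a_α z^α ↦ (a_α)_α`, is at most `√2^m`: whenever `P₁, …, P_N` are `m`-homogeneous
polynomials such that `sup_{z ∈ 𝔻^n} |∑ λ_t P_t(z)| ≤ 1` for all scalars `|λ_t| ≤ 1`,
then `∑_t (∑_α |a_α^{(t)}|²)^{1/2} ≤ √2^m`. -/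
theorem one_summing_norm_coefficient_map (m n : ℕ) (hm : 0 < m) (hn : 0 < n) (N : ℕ)
    (a : Fin N → (Fin n → ℕ) → ℂ)
    (h : ∀ lam : Fin N → ℂ, (∀ t, ‖lam t‖ ≤ 1) →
      ∀ z : Fin n → ℂ, (∀ i, ‖z i‖ < 1) →
        ‖∑ t, lam t * mhEval n m (a t) z‖ ≤ 1) :
    ∑ t, Real.sqrt (∑ α ∈ Finset.Nat.antidiagonalTuple n m, ‖a t α‖ ^ 2)
      ≤ Real.sqrt 2 ^ m := by
  have hsum (z : Fin n → ℂ) (hz : ∀ i, ‖z i‖ ≤ 1) : ∑ t, ‖mhEval n m (a t) z‖ ≤ 1 :=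
    sum_norm_le_of_forall_norm_sum_mul_le fun lam hlam ↦
      le_on_closedPolydisc_of_le_on_polydisc (f := fun z ↦ ‖∑ t, lam t * mhEval n m (a t) z‖)
        (continuous_finsetSum _ fun t _ ↦ (continuous_mhEval n m (a t)).const_mul _).norm
        (h lam hlam) z hz
  have torus := hasLowerTwoEstimate_toCircle.pi (integrable_const_mul_toCircle_pow _) n
  refine torus.sum_sqrt_le
    (fun α ↦ .fintype_prod fun i ↦ integrable_const_mul_toCircle_pow _ (α i)) _ a fun x ↦ ?_
  let z : Fin n → ℂ := fun i ↦ (x i).toCircle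
  calc
    ∑ t, ‖mhEval n m (a t) fun i ↦ (Real.sqrt 2 : ℂ) * z i‖
      = Real.sqrt 2 ^ m * ∑ t, ‖mhEval n m (a t) z‖ := by
        simp only [mhEval_const_mul, norm_mul, norm_pow, Complex.norm_real,
          Real.norm_of_nonneg (Real.sqrt_nonneg 2), mul_sum]
    _ ≤ Real.sqrt 2 ^ m * 1 := by
        gcongr
        exact hsum z fun i ↦ (Circle.norm_coe _).le
    _ = Real.sqrt 2 ^ m := mul_one _
end

section
/- For all positive integers m, n and every family (c_i)_{i ∈ M(m,n)} of complex numbers, one has (∑_{i ∈ M(m,n)} |c_i|^{2m/(m+1)})^{(m+1)/(2m)} ≤ ∏_{k=1}^m [ ∑_{i_k=1}^n ( ∑_{i^k ∈ M(m-1,n)} |c_i|² )^{1/2} ]^{1/m}. (Blei's mixed-norm inequality.) -/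
open Finset

/-!
Write `S k v` for the `ℓ^p` norm of the part of `f` on the slice `i k = v`, and
`A k = ∑ v, S k v`. Although `∏ k, S k (i k)` and `f i ^ p / S k (i k) ^ (p - 1)` depend on the
slice norms, their sums over `i` are simply `∏ k, A k` and `A k`. In a geometric mean of these
`m + 1` families with weight proportional to `p - 1` on the first and to `1` on each of the others,
the slice norms cancel and `f i ^ (p * m / (m + p - 1))` remains, so Hölder's inequality bounds
the sum of the latter by `(∏ k, A k) ^ (p / (m + p - 1))`.
-/

open scoped NNReal ENNReal

theorem sum_rpow_mul_prod_rpow_le {κ ι : Type*} [Fintype κ] (s : Finset ι) (g : κ → ℝ≥0)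
    (f : ι → κ → ℝ≥0) {q : ℝ} {w : ι → ℝ} (hsum : q + ∑ k ∈ s, w k = 1) (hq : 0 ≤ q)
    (hw : ∀ k ∈ s, 0 ≤ w k) :
    ∑ a, g a ^ q * ∏ k ∈ s, f k a ^ w k ≤ (∑ a, g a) ^ q * ∏ k ∈ s, (∑ a, f k a) ^ w k := by
  let _ : MeasurableSpace κ := ⊤
  have holder := ENNReal.lintegral_mul_prod_norm_pow_le (μ := MeasureTheory.Measure.count) s
    (g := fun a ↦ (g a : ℝ≥0∞)) (f := fun k a ↦ (f k a : ℝ≥0∞))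
    measurable_from_top.aemeasurable (fun _ _ ↦ measurable_from_top.aemeasurable) q hsum hq hw
  simp only [MeasureTheory.lintegral_count, tsum_fintype] at holder
  have coe_prod_rpow (x : ι → ℝ≥0) :
      ∏ k ∈ s, (x k : ℝ≥0∞) ^ w k = ((∏ k ∈ s, x k ^ w k : ℝ≥0) : ℝ≥0∞) := by
    rw [ENNReal.ofNNReal_finsetProd]
    exact prod_congr rfl fun k hk ↦ (ENNReal.coe_rpow_of_nonneg _ (hw k hk)).symm
  simp only [← ENNReal.ofNNReal_finsetSum, coe_prod_rpow,
    ← ENNReal.coe_rpow_of_nonneg _ hq] at holder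
  exact_mod_cast holder

section MixedNorm

variable {ι : Type*} {α : ι → Type*} [Fintype ι] [DecidableEq ι] [∀ k, Fintype (α k)]
  [∀ k, DecidableEq (α k)]

/-- The `ℓ^p` norm of the restriction of `f` to the slice `{i | i k = v}`. -/
noncomputable def sliceNorm (p : ℝ) (f : (∀ k, α k) → ℝ≥0) (k : ι) (v : α k) : ℝ≥0 :=
  (∑ i with i k = v, f i ^ p) ^ (1 / p)

/-- The mixed `(ℓ^1, ℓ^p)` norm of `f`: the `ℓ^1` norm in the coordinate `k` of the `ℓ^p` norm in
all the other coordinates. -/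
noncomputable def mixedNorm (p : ℝ) (f : (∀ k, α k) → ℝ≥0) (k : ι) : ℝ≥0 :=
  ∑ v, sliceNorm p f k v

theorem sliceNorm_rpow {p : ℝ} (hp : p ≠ 0) (f : (∀ k, α k) → ℝ≥0) (k : ι) (v : α k) :
    sliceNorm p f k v ^ p = ∑ i with i k = v, f i ^ p := by
  rw [sliceNorm, one_div, NNReal.rpow_inv_rpow hp]

theorem sliceNorm_pos {p : ℝ} {f : (∀ k, α k) → ℝ≥0} {i : ∀ k, α k} (hi : 0 < f i) (k : ι) :
    0 < sliceNorm p f k (i k) :=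
  NNReal.rpow_pos <| (NNReal.rpow_pos hi).trans_le <|
    single_le_sum (f := fun j ↦ f j ^ p) (fun _ _ ↦ zero_le) (by simp)

theorem sum_prod_sliceNorm (p : ℝ) (f : (∀ k, α k) → ℝ≥0) :
    ∑ i : ∀ k, α k, ∏ k, sliceNorm p f k (i k) = ∏ k, mixedNorm p f k :=
  (Fintype.prod_sum _).symm

theorem sum_rpow_div_sliceNorm_rpow {p : ℝ} (hp : p ≠ 0) (f : (∀ k, α k) → ℝ≥0) (k : ι) :
    ∑ i, f i ^ p / sliceNorm p f k (i k) ^ (p - 1) = mixedNorm p f k := by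
  rw [mixedNorm, ← sum_fiberwise univ fun i : ∀ k, α k ↦ i k]
  refine sum_congr rfl fun v _ ↦ ?_
  calc ∑ i with i k = v, f i ^ p / sliceNorm p f k (i k) ^ (p - 1)
      = ∑ i with i k = v, f i ^ p / sliceNorm p f k v ^ (p - 1) :=
        sum_congr rfl fun i hi ↦ by rw [(mem_filter.1 hi).2]
    _ = sliceNorm p f k v ^ p / sliceNorm p f k v ^ (p - 1) := by
        rw [← sum_div, sliceNorm_rpow hp]
    _ = sliceNorm p f k v := by
        rcases eq_or_ne (sliceNorm p f k v) 0 with h | h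
        · simp [h, hp]
        · rw [← NNReal.rpow_sub h, sub_sub_cancel, NNReal.rpow_one]

theorem rpow_eq_prod_sliceNorm_rpow_mul_prod [Nonempty ι] {p : ℝ} (hp : 0 < p)
    (f : (∀ k, α k) → ℝ≥0) (i : ∀ k, α k) :
    f i ^ (p * Fintype.card ι / (Fintype.card ι + p - 1)) =
      (∏ k, sliceNorm p f k (i k)) ^ ((p - 1) / (Fintype.card ι + p - 1)) *
        ∏ k, (f i ^ p / sliceNorm p f k (i k) ^ (p - 1)) ^ (1 / (Fintype.card ι + p - 1)) := by
  have hm : (1 : ℝ) ≤ Fintype.card ι := mod_cast Fintype.card_pos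
  have hd : 0 < Fintype.card ι + p - 1 := by linarith
  set d : ℝ := Fintype.card ι + p - 1
  rcases eq_zero_or_pos (f i) with hi | hi
  · simp [hi, NNReal.zero_rpow, hd.ne', hp.ne']
  set S : ℝ≥0 := ∏ k, sliceNorm p f k (i k) with hS
  have hS_pos : 0 < S := prod_pos fun k _ ↦ sliceNorm_pos hi k
  symm
  calc S ^ ((p - 1) / d) * ∏ k, (f i ^ p / sliceNorm p f k (i k) ^ (p - 1)) ^ (1 / d)
      = S ^ ((p - 1) / d) * ((f i ^ p) ^ Fintype.card ι / S ^ (p - 1)) ^ (1 / d) := by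
        rw [NNReal.finsetProd_rpow, prod_div_distrib, prod_const, card_univ,
          NNReal.finsetProd_rpow, hS]
    _ = S ^ ((p - 1) / d) * (((f i ^ p) ^ Fintype.card ι) ^ (1 / d) / S ^ ((p - 1) / d)) := by
        rw [NNReal.div_rpow, ← NNReal.rpow_mul S, mul_one_div]
    _ = ((f i ^ p) ^ Fintype.card ι) ^ (1 / d) := mul_div_cancel₀ _ (NNReal.rpow_pos hS_pos).ne'
    _ = f i ^ (p * Fintype.card ι / d) := by
        rw [← NNReal.rpow_natCast, ← NNReal.rpow_mul, ← NNReal.rpow_mul, mul_one_div,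
          mul_div_assoc]

theorem sum_rpow_le_prod_mixedNorm_rpow [Nonempty ι] {p : ℝ} (hp : 1 ≤ p)
    (f : (∀ k, α k) → ℝ≥0) :
    ∑ i, f i ^ (p * Fintype.card ι / (Fintype.card ι + p - 1)) ≤
      (∏ k, mixedNorm p f k) ^ (p / (Fintype.card ι + p - 1)) := by
  have hp_pos : 0 < p := zero_lt_one.trans_le hp
  have hm : (0 : ℝ) < Fintype.card ι := mod_cast Fintype.card_pos
  have hd : 0 < Fintype.card ι + p - 1 := by linarith
  set d : ℝ := Fintype.card ι + p - 1
  have hweights : (p - 1) / d + ∑ _k : ι, 1 / d = 1 := by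
    rw [sum_const, card_univ, nsmul_eq_mul, mul_one_div, ← add_div, div_eq_one_iff_eq hd.ne']
    simp only [d]
    ring
  calc ∑ i, f i ^ (p * Fintype.card ι / d)
      = ∑ i, (∏ k, sliceNorm p f k (i k)) ^ ((p - 1) / d) *
          ∏ k, (f i ^ p / sliceNorm p f k (i k) ^ (p - 1)) ^ (1 / d) :=
        sum_congr rfl fun i _ ↦ rpow_eq_prod_sliceNorm_rpow_mul_prod hp_pos f i
    _ ≤ (∑ i : ∀ k, α k, ∏ k, sliceNorm p f k (i k)) ^ ((p - 1) / d) *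
          ∏ k, (∑ i, f i ^ p / sliceNorm p f k (i k) ^ (p - 1)) ^ (1 / d) :=
        sum_rpow_mul_prod_rpow_le univ _ _ hweights (div_nonneg (sub_nonneg.2 hp) hd.le)
          fun _ _ ↦ one_div_nonneg.2 hd.le
    _ = (∏ k, mixedNorm p f k) ^ ((p - 1) / d) * (∏ k, mixedNorm p f k) ^ (1 / d) := by
        simp only [sum_prod_sliceNorm, NNReal.finsetProd_rpow,
          sum_rpow_div_sliceNorm_rpow hp_pos.ne']
    _ = (∏ k, mixedNorm p f k) ^ (p / d) := by
        rw [← NNReal.rpow_add_of_nonneg _ (div_nonneg (sub_nonneg.2 hp) hd.le)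
          (one_div_nonneg.2 hd.le), ← add_div, sub_add_cancel]

theorem rpow_sum_rpow_le_prod_mixedNorm [Nonempty ι] {p : ℝ} (hp : 1 ≤ p)
    (f : (∀ k, α k) → ℝ≥0) :
    (∑ i, f i ^ (p * Fintype.card ι / (Fintype.card ι + p - 1))) ^
        ((Fintype.card ι + p - 1) / (p * Fintype.card ι)) ≤
      ∏ k, mixedNorm p f k ^ (1 / Fintype.card ι : ℝ) := by
  have hm : (0 : ℝ) < Fintype.card ι := mod_cast Fintype.card_pos
  have hd : 0 < Fintype.card ι + p - 1 := by linarith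
  have hexp : p / (Fintype.card ι + p - 1) * ((Fintype.card ι + p - 1) / (p * Fintype.card ι)) =
      1 / Fintype.card ι := by
    rw [div_mul_div_cancel₀ hd.ne', div_mul_cancel_left₀ (by positivity), one_div]
  rw [NNReal.finsetProd_rpow, ← hexp, NNReal.rpow_mul]
  exact NNReal.rpow_le_rpow (sum_rpow_le_prod_mixedNorm_rpow hp f) (by positivity)

theorem blei_inequality_general {E : Type*} [SeminormedAddCommGroup E] [Nonempty ι] {p : ℝ}
    (hp : 1 ≤ p) (c : (∀ k, α k) → E) :
    (∑ i, ‖c i‖ ^ (p * Fintype.card ι / (Fintype.card ι + p - 1))) ^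
        ((Fintype.card ι + p - 1) / (p * Fintype.card ι)) ≤
      ∏ k, (∑ v, (∑ i with i k = v, ‖c i‖ ^ p) ^ (1 / p)) ^ (1 / Fintype.card ι : ℝ) := by
  simpa [mixedNorm, sliceNorm] using
    NNReal.coe_le_coe.2 (rpow_sum_rpow_le_prod_mixedNorm hp fun i ↦ ‖c i‖₊)

end MixedNorm

/-- Blei's mixed-norm inequality: for every family `(c_i)_{i ∈ M(m,n)}` of complex numbers,
`(∑_i |c_i|^{2m/(m+1)})^{(m+1)/(2m)} ≤ ∏_{k=1}^m [∑_{i_k} (∑_{i^k} |c_i|²)^{1/2}]^{1/m}`,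
where `M(m,n)` is the set of multi-indices `i = (i₁,…,i_m)` with entries in `{1,…,n}`. -/
theorem blei_inequality (m n : ℕ) (hm : 0 < m) (hn : 0 < n)
    (c : (Fin m → Fin n) → ℂ) :
    (∑ i : Fin m → Fin n, ‖c i‖ ^ ((2 * (m : ℝ)) / ((m : ℝ) + 1)))
        ^ (((m : ℝ) + 1) / (2 * (m : ℝ)))
      ≤ ∏ k : Fin m,
          (∑ v : Fin n, Real.sqrt
              (∑ i ∈ Finset.univ.filter (fun i : Fin m → Fin n => i k = v), ‖c i‖ ^ 2))
            ^ ((1 : ℝ) / (m : ℝ)) := by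
  have : Nonempty (Fin m) := ⟨⟨0, hm⟩⟩
  simpa [Real.sqrt_eq_rpow, add_sub_assoc, show (2 : ℝ) - 1 = 1 by norm_num] using
    blei_inequality_general one_le_two c
end
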